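/- arXiv:2106.15956 — 3 statements merged into one kernel-verified Lean document; each statement's English description precedes it below -/
import Mathlib

section
/- Let J⊂K with J≠K and U_J≠∅ be given and suppose one of the hypotheses (b), (d1b), (J) is satisfied. Then there are an open subset 𝒪_J of C^1_n with X_{fJ} ⊂ X_f∩𝒪_J and a diffeomorphism A_J from 𝒪_J onto an open subset of C^1_n such that A_J(φ)=R^J(φ) for every φ∈X_f∩𝒪_J ⊂ N_J, A_J(χ)=χ for every χ∈X_0∩(X_f∩𝒪_J), and A_J(X_f∩𝒪_J) = X_0∩A_J(𝒪_J). -/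
set_option linter.unusedSectionVars false

open Set

noncomputable section

/-- The compact interval `[-r,0]`. -/
abbrev Icc0 (r : ℝ) : Set ℝ := Set.Icc (-r) 0

/-- Extension of a continuous map on `[-r,0]` to `ℝ`, by the value `0` outside. -/
def extFun {r : ℝ} {E : Type*} [TopologicalSpace E] [Zero E] (φ : C(Icc0 r, E)) : ℝ → E :=
  fun t => if h : t ∈ Icc0 r then φ ⟨t, h⟩ else 0

section extlemmas

variable {r : ℝ} {E : Type*} [NormedAddCommGroup E] [NormedSpace ℝ E]

lemma extFun_add (φ ψ : C(Icc0 r, E)) : extFun (φ + ψ) = extFun φ + extFun ψ := by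
  funext t; by_cases h : t ∈ Icc0 r <;> simp [extFun, h]

lemma extFun_zero : extFun (0 : C(Icc0 r, E)) = 0 := by
  funext t; by_cases h : t ∈ Icc0 r <;> simp [extFun, h]

lemma extFun_smul (c : ℝ) (φ : C(Icc0 r, E)) : extFun (c • φ) = c • extFun φ := by
  funext t; by_cases h : t ∈ Icc0 r <;> simp [extFun, h]

end extlemmas

/-- The space `C¹([-r,0],E)`, realized as the closed subspace of pairs `(φ, φ')` in
`C([-r,0],E) × C([-r,0],E)` such that `φ` is differentiable on `[-r,0]` with derivative `φ'`. -/
def C1sub (r : ℝ) (E : Type*) [NormedAddCommGroup E] [NormedSpace ℝ E] :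
    Submodule ℝ (C(Icc0 r, E) × C(Icc0 r, E)) where
  carrier := {p | ∀ t ∈ Icc0 r, HasDerivWithinAt (extFun p.1) (extFun p.2 t) (Icc0 r) t}
  add_mem' := by
    intro p q hp hq t ht
    have h := (hp t ht).add (hq t ht)
    have e1 : extFun (p + q).1 = fun s => extFun p.1 s + extFun q.1 s := by
      simp [Prod.fst_add, extFun_add]; rfl
    have e2 : extFun (p + q).2 t = extFun p.2 t + extFun q.2 t := by
      simp [Prod.snd_add, extFun_add]
    rw [e1, e2]; exact h
  zero_mem' := by
    intro t ht
    have e1 : extFun (0 : C(Icc0 r, E) × C(Icc0 r, E)).1 = fun _ : ℝ => (0 : E) := by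
      simp [extFun_zero]; rfl
    have e2 : extFun (0 : C(Icc0 r, E) × C(Icc0 r, E)).2 t = 0 := by
      simp [extFun_zero]
    rw [e1, e2]; exact hasDerivWithinAt_const _ _ _
  smul_mem' := by
    intro c p hp t ht
    have h := (hp t ht).const_smul c
    have e1 : extFun (c • p).1 = fun s => c • extFun p.1 s := by
      simp [Prod.smul_fst, extFun_smul]; rfl
    have e2 : extFun (c • p).2 t = c • extFun p.2 t := by
      simp [Prod.smul_snd, extFun_smul]
    rw [e1, e2]; exact h

/-- The Banach space `C¹([-r,0],E)`. -/
abbrev C1 (r : ℝ) (E : Type*) [NormedAddCommGroup E] [NormedSpace ℝ E] := ↥(C1sub r E)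

section C1ops

variable {r : ℝ} {E : Type*} [NormedAddCommGroup E] [NormedSpace ℝ E]

/-- Evaluation `φ(t)` of `φ ∈ C¹([-r,0],E)` (extended by `0` outside `[-r,0]`). -/
def evC (φ : C1 r E) (t : ℝ) : E := extFun φ.1.1 t

/-- Evaluation `φ'(t)` of the derivative of `φ ∈ C¹([-r,0],E)`. -/
def dvC (φ : C1 r E) (t : ℝ) : E := extFun φ.1.2 t

end C1ops

/-- The continuous linear map `ℝ → (Fin n → ℝ)` sending `x` to the vector `x·e_ν`. -/
def sCLM (n : ℕ) (ν : Fin n) : ℝ →L[ℝ] (Fin n → ℝ) :=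
  ContinuousLinearMap.pi (fun j => if j = ν then ContinuousLinearMap.id ℝ ℝ else 0)

/-- `ψ · e_ν` for a continuous map `ψ`. -/
def CMsingle {r : ℝ} {n : ℕ} (ν : Fin n) (φ : C(Icc0 r, ℝ)) : C(Icc0 r, Fin n → ℝ) :=
  ⟨fun t => sCLM n ν (φ t), (sCLM n ν).continuous.comp φ.continuous⟩

lemma extFun_CMsingle {r : ℝ} {n : ℕ} (ν : Fin n) (φ : C(Icc0 r, ℝ)) (t : ℝ) :
    extFun (CMsingle ν φ) t = sCLM n ν (extFun φ t) := by
  by_cases h : t ∈ Icc0 r <;> simp [extFun, CMsingle, h]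

/-- `ψ · e_ν ∈ C¹([-r,0],ℝⁿ)` for a scalar function `ψ ∈ C¹([-r,0],ℝ)`. -/
def singleC1 {r : ℝ} {n : ℕ} (ν : Fin n) (φ : C1 r ℝ) : C1 r (Fin n → ℝ) :=
  ⟨(CMsingle ν φ.1.1, CMsingle ν φ.1.2), by
    intro t ht
    have h := ((sCLM n ν).hasFDerivAt).comp_hasDerivWithinAt t (φ.2 t ht)
    have e1 : extFun (CMsingle ν φ.1.1) = (sCLM n ν) ∘ (extFun φ.1.1) := by
      funext s; exact extFun_CMsingle ν φ.1.1 s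
    rw [show (CMsingle ν φ.1.1, CMsingle ν φ.1.2).1 = CMsingle ν φ.1.1 from rfl,
      show (CMsingle ν φ.1.1, CMsingle ν φ.1.2).2 = CMsingle ν φ.1.2 from rfl,
      e1, extFun_CMsingle]
    exact h⟩

/-- The linear map `ℝⁿ → C¹([-r,0],ℝⁿ)`, `x ↦ Σ_ν x_ν ψ_ν · e_ν` (the map `Y·x`). -/
def Ymap {r : ℝ} {n : ℕ} (ψ : Fin n → C1 r ℝ) : (Fin n → ℝ) →ₗ[ℝ] C1 r (Fin n → ℝ) where
  toFun x := ∑ ν, x ν • singleC1 ν (ψ ν)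
  map_add' x y := by simp [add_smul, Finset.sum_add_distrib]
  map_smul' c x := by simp [smul_smul, Finset.smul_sum]

/-- The closed subspace `X₀ = {φ ∈ C¹ : φ'(0) = 0}`. -/
def X0sub (r : ℝ) (n : ℕ) : Submodule ℝ (C1 r (Fin n → ℝ)) where
  carrier := {φ | dvC φ 0 = 0}
  add_mem' := by
    intro φ ψ hφ hψ
    have : dvC (φ + ψ) 0 = dvC φ 0 + dvC ψ 0 := by
      simp [dvC, extFun_add]
    rw [Set.mem_setOf_eq] at *
    rw [this, hφ, hψ, add_zero]
  zero_mem' := by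
    show dvC (0 : C1 r (Fin n → ℝ)) 0 = 0
    simp [dvC, extFun_zero]
  smul_mem' := by
    intro c φ hφ
    have : dvC (c • φ) 0 = c • dvC φ 0 := by simp [dvC, extFun_smul]
    rw [Set.mem_setOf_eq] at *
    rw [this, hφ, smul_zero]

/-- The projection-like map `R φ = φ − Y·φ'(0)`. -/
def RKmap {r : ℝ} {n : ℕ} (ψ : Fin n → C1 r ℝ) (φ : C1 r (Fin n → ℝ)) : C1 r (Fin n → ℝ) :=
  φ - Ymap ψ (dvC φ 0)

section diffeos

variable {E : Type*} [NormedAddCommGroup E] [NormedSpace ℝ E]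
variable {E' : Type*} [NormedAddCommGroup E'] [NormedSpace ℝ E']

/-- `f` defines a `C¹`-diffeomorphism from `s` onto `t`: `f` is continuously differentiable
on `s`, injective on `s`, maps `s` onto `t`, and has a continuously differentiable inverse. -/
def IsC1DiffeoOn (f : E → E') (s : Set E) (t : Set E') : Prop :=
  ContDiffOn ℝ 1 f s ∧ Set.InjOn f s ∧ f '' s = t ∧
    ∃ g : E' → E, ContDiffOn ℝ 1 g t ∧ Set.InvOn g f s t

/-- The tangent cone of `X ⊆ E` at `x`: all velocities `c'(0)` of continuously differentiable
curves in `X` through `x`. -/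
def tangentSet (X : Set E) (x : E) : Set E :=
  {v | ∃ (c : ℝ → E) (ε : ℝ), 0 < ε ∧ ContDiffOn ℝ 1 c (Set.Ioo (-ε) ε) ∧
      (∀ s ∈ Set.Ioo (-ε) ε, c s ∈ X) ∧ c 0 = x ∧ HasDerivWithinAt c v (Set.Ioo (-ε) ε) 0}

/-- `X` is a continuously differentiable submanifold of codimension `m` of `E`. -/
def IsC1SubmanifoldCodim (X : Set E) (m : ℕ) : Prop :=
  ∀ x ∈ X, ∃ (O : Set E) (Φ : E → E) (H Q : Submodule ℝ E),
    IsOpen O ∧ x ∈ O ∧ IsClosed (H : Set E) ∧ IsCompl H Q ∧ Module.finrank ℝ Q = m ∧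
    IsOpen (Φ '' O) ∧ IsC1DiffeoOn Φ O (Φ '' O) ∧ Φ '' (X ∩ O) = (H : Set E) ∩ (Φ '' O)

/-- `X` is a continuously differentiable submanifold of `E`. -/
def IsC1Submanifold (X : Set E) : Prop :=
  ∀ x ∈ X, ∃ (O : Set E) (Φ : E → E) (H : Submodule ℝ E),
    IsOpen O ∧ x ∈ O ∧ IsClosed (H : Set E) ∧
    IsOpen (Φ '' O) ∧ IsC1DiffeoOn Φ O (Φ '' O) ∧ Φ '' (X ∩ O) = (H : Set E) ∩ (Φ '' O)

/-- `A` is an almost graph over `H`. -/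
def IsAlmostGraphOver (A : Set E) (H : Set E) : Prop :=
  ∃ (dm : Set E) (α : E → E), dm ⊆ H ∧ ContDiffOn ℝ 1 α dm ∧
    (∀ ζ ∈ dm ∩ A, α ζ = 0) ∧ (∀ ζ ∈ dm \ A, α ζ ∉ H) ∧
    IsC1DiffeoOn (fun ζ => ζ + α ζ) dm A

end diffeos

/-- The data of the delay differential system
`x'(t) = g(x(t-d_1(Lx_t)),…,x(t-d_kk(Lx_t)))`. -/
structure Setting (r : ℝ) (n kk : ℕ) (F : Type*) [NormedAddCommGroup F] [NormedSpace ℝ F] where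
  /-- The continuous linear map `L : C([-r,0],ℝⁿ) → F`. -/
  L : C(Icc0 r, Fin n → ℝ) →L[ℝ] F
  /-- The open set `W ⊆ F`. -/
  W : Set F
  Wopen : IsOpen W
  /-- The delay functions `d_k : W → [0,r]`. -/
  d : Fin kk → F → ℝ
  d_smooth : ∀ k, ContDiffOn ℝ 1 (d k) W
  d_mem : ∀ k, ∀ w ∈ W, d k w ∈ Set.Icc (0:ℝ) r
  /-- The open set `V ⊆ (ℝⁿ)^kk`. -/
  V : Set (Fin kk → Fin n → ℝ)
  Vopen : IsOpen V
  /-- The right hand side function `g : V → ℝⁿ`. -/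
  g : (Fin kk → Fin n → ℝ) → Fin n → ℝ
  g_smooth : ContDiffOn ℝ 1 g V

namespace Setting

variable {r : ℝ} {n kk : ℕ} {F : Type*} [NormedAddCommGroup F] [NormedSpace ℝ F]
variable (S : Setting r n kk F)

/-- `L` applied to (the `C⁰`-part of) `φ ∈ C¹`. -/
def Lof (φ : C1 r (Fin n → ℝ)) : F := S.L φ.1.1

/-- `φ̂ = (φ(-d_1(Lφ)),…,φ(-d_kk(Lφ)))`. -/
def hat (φ : C1 r (Fin n → ℝ)) : Fin kk → Fin n → ℝ := fun k => evC φ (-(S.d k (S.Lof φ)))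

/-- The domain `U = {φ ∈ C¹ : Lφ ∈ W, φ̂ ∈ V}`. -/
def U : Set (C1 r (Fin n → ℝ)) := {φ | S.Lof φ ∈ S.W ∧ S.hat φ ∈ S.V}

/-- The right hand side `f(φ) = g(φ̂)`. -/
def fmap (φ : C1 r (Fin n → ℝ)) : Fin n → ℝ := S.g (S.hat φ)

/-- The solution manifold `X_f = {φ ∈ U : φ'(0) = f(φ)}`. -/
def Xf : Set (C1 r (Fin n → ℝ)) := {φ | φ ∈ S.U ∧ dvC φ 0 = S.fmap φ}

/-- `W_J = {w ∈ W : d_j(w)=0 for j∈J, d_k(w)>0 for k∉J}`. -/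
def WJ (J : Finset (Fin kk)) : Set F :=
  {w | w ∈ S.W ∧ (∀ j ∈ J, S.d j w = 0) ∧ ∀ k ∉ J, 0 < S.d k w}

/-- `W^J = {w ∈ W : d_k(w)>0 for k∉J}`. -/
def WupJ (J : Finset (Fin kk)) : Set F :=
  {w | w ∈ S.W ∧ ∀ k ∉ J, 0 < S.d k w}

/-- `U_J = U ∩ L⁻¹(W_J)`. -/
def UJ (J : Finset (Fin kk)) : Set (C1 r (Fin n → ℝ)) := {φ | φ ∈ S.U ∧ S.Lof φ ∈ S.WJ J}

/-- `U^J = U ∩ L⁻¹(W^J)`. -/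
def UupJ (J : Finset (Fin kk)) : Set (C1 r (Fin n → ℝ)) := {φ | φ ∈ S.U ∧ S.Lof φ ∈ S.WupJ J}

/-- `X_{fJ} = X_f ∩ U_J`. -/
def XfJ (J : Finset (Fin kk)) : Set (C1 r (Fin n → ℝ)) := S.Xf ∩ S.UJ J

/-- Hypothesis (b): `g` is bounded. -/
def HypB : Prop := ∃ M, ∀ v ∈ S.V, ‖S.g v‖ ≤ M

/-- Hypothesis (d1b): `d₁ = 0` on `W` and `g` is bounded on subsets of `V` with bounded
first component. -/
def HypD1B (hk : 0 < kk) : Prop :=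
  (∀ w ∈ S.W, S.d ⟨0, hk⟩ w = 0) ∧
  ∀ B : Set (Fin n → ℝ), Bornology.IsBounded B →
    Bornology.IsBounded (S.g '' {v | v ∈ S.V ∧ v ⟨0, hk⟩ ∈ B})

/-- The partial derivative `∂_{(k-1)n+ν} g_μ (φ̂)`. -/
def dgCoeff (φ : C1 r (Fin n → ℝ)) (k : Fin kk) (ν : Fin n) (μ : Fin n) : ℝ :=
  fderivWithin ℝ S.g S.V (S.hat φ) (Pi.single k (Pi.single ν 1)) μ

/-- The right hand side of the formula for `Df_μ(φ)χ`. -/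
def dFormula (φ χ : C1 r (Fin n → ℝ)) (μ : Fin n) : ℝ :=
  ∑ k, ∑ ν, S.dgCoeff φ k ν μ *
    (evC χ (-(S.d k (S.Lof φ))) ν -
      dvC φ (-(S.d k (S.Lof φ))) ν * fderivWithin ℝ (S.d k) S.W (S.Lof φ) (S.Lof χ))

/-- The map `R^J(φ) = φ − Y_J(Lφ)·φ'(0)` of Section 4 of the paper. -/
def RJmap (y : Fin n → F → C1 r ℝ) (φ : C1 r (Fin n → ℝ)) : C1 r (Fin n → ℝ) :=
  φ - Ymap (fun ν => y ν (S.Lof φ)) (dvC φ 0)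

end Setting


section helpers

variable {r : ℝ} {n kk : ℕ} {F : Type*} [NormedAddCommGroup F] [NormedSpace ℝ F]

lemma sCLM_apply' (ν : Fin n) (x : ℝ) (j : Fin n) :
    sCLM n ν x j = if j = ν then x else 0 := by
  by_cases h : j = ν <;> simp [sCLM, h]

/-- `CMsingle` as a continuous linear map. -/
def cmSingleL (r : ℝ) {n : ℕ} (ν : Fin n) : C(Icc0 r, ℝ) →L[ℝ] C(Icc0 r, Fin n → ℝ) where
  toFun := CMsingle ν
  map_add' a b := by ext t j; simp [CMsingle]
  map_smul' a b := by
    ext t j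
    exact congrFun ((sCLM n ν).map_smul a (b t)) j
  cont := by
    have h : (CMsingle ν : C(Icc0 r, ℝ) → C(Icc0 r, Fin n → ℝ)) =
      fun φ => ContinuousMap.comp ⟨sCLM n ν, (sCLM n ν).continuous⟩ φ := by
      funext φ; rfl
    rw [h]
    exact ContinuousMap.continuous_postcomp _

/-- `singleC1` as a continuous linear map. -/
def singleL (r : ℝ) {n : ℕ} (ν : Fin n) : C1 r ℝ →L[ℝ] C1 r (Fin n → ℝ) where
  toFun := singleC1 ν
  map_add' a b := by
    apply Subtype.ext
    exact Prod.ext ((cmSingleL r ν).map_add a.1.1 b.1.1) ((cmSingleL r ν).map_add a.1.2 b.1.2)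
  map_smul' c a := by
    apply Subtype.ext
    exact Prod.ext ((cmSingleL r ν).map_smul c a.1.1) ((cmSingleL r ν).map_smul c a.1.2)
  cont := by
    refine Continuous.subtype_mk (f := fun φ : C1 r ℝ => (CMsingle ν φ.1.1, CMsingle ν φ.1.2)) ?_ _
    exact ((cmSingleL r ν).continuous.comp (continuous_fst.comp continuous_subtype_val)).prodMk
      ((cmSingleL r ν).continuous.comp (continuous_snd.comp continuous_subtype_val))

/-- `φ ↦ φ'(0)` as a continuous linear map. -/
def dv0L (r : ℝ) (n : ℕ) : C1 r (Fin n → ℝ) →L[ℝ] (Fin n → ℝ) where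
  toFun φ := dvC φ 0
  map_add' a b := by simp [dvC, extFun_add]
  map_smul' a b := by simp [dvC, extFun_smul]
  cont := by
    by_cases h : (0 : ℝ) ∈ Icc0 r
    · have e : (fun φ : C1 r (Fin n → ℝ) => dvC φ 0) = fun φ => φ.1.2 ⟨0, h⟩ := by
        funext φ; simp only [dvC, extFun, dif_pos h]
      rw [e]
      exact (ContinuousEvalConst.continuous_eval_const (F := C(Icc0 r, Fin n → ℝ))
        (⟨0, h⟩ : Icc0 r)).comp (continuous_snd.comp continuous_subtype_val)
    · have e : (fun φ : C1 r (Fin n → ℝ) => dvC φ 0) = fun φ => 0 := by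
        funext φ; simp only [dvC, extFun, dif_neg h]
      rw [e]
      exact continuous_const

/-- `Lof` as a continuous linear map. -/
def lofL (S : Setting r n kk F) : C1 r (Fin n → ℝ) →L[ℝ] F :=
  S.L.comp ((ContinuousLinearMap.fst ℝ _ _).comp (C1sub r (Fin n → ℝ)).subtypeL)

lemma lofL_apply (S : Setting r n kk F) (φ : C1 r (Fin n → ℝ)) : lofL S φ = S.Lof φ := rfl

lemma dv0L_apply (φ : C1 r (Fin n → ℝ)) : dv0L r n φ = dvC φ 0 := rfl

lemma singleL_apply (ν : Fin n) (φ : C1 r ℝ) : singleL r ν φ = singleC1 ν φ := rfl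

lemma contDiffOn_smul_aux {X G : Type*} [NormedAddCommGroup X] [NormedSpace ℝ X]
    [NormedAddCommGroup G] [NormedSpace ℝ G] {c : X → ℝ} {v : X → G} {s : Set X}
    (h1 : ContDiffOn ℝ 1 c s) (h2 : ContDiffOn ℝ 1 v s) :
    ContDiffOn ℝ 1 (fun x => c x • v x) s := h1.smul h2

lemma contDiff_dv0 : ContDiff ℝ 1 (fun φ : C1 r (Fin n → ℝ) => dvC φ 0) := by
  have h : ContDiff ℝ 1 (⇑(dv0L r n)) :=
    ContinuousLinearMap.contDiff (𝕜 := ℝ) (E := C1 r (Fin n → ℝ)) (F := Fin n → ℝ) (n := 1) (dv0L r n)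
  exact h

lemma lof_Ymap (S : Setting r n kk F) (ψ : Fin n → C1 r ℝ)
    (h : ∀ ν, S.L (singleC1 ν (ψ ν)).1.1 = 0) (x : Fin n → ℝ) : S.Lof (Ymap ψ x) = 0 := by
  rw [← lofL_apply]
  show lofL S (∑ ν, x ν • singleC1 ν (ψ ν)) = 0
  rw [map_sum]
  refine Finset.sum_eq_zero fun ν _ => ?_
  rw [map_smul, lofL_apply]
  show x ν • S.L (singleC1 ν (ψ ν)).1.1 = 0
  rw [h, smul_zero]

lemma dv_Ymap (ψ : Fin n → C1 r ℝ)
    (h : ∀ ν, dvC (ψ ν) 0 = 1) (x : Fin n → ℝ) : dvC (Ymap ψ x) 0 = x := by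
  rw [← dv0L_apply]
  show dv0L r n (∑ ν, x ν • singleC1 ν (ψ ν)) = x
  rw [map_sum]
  have : ∀ ν, dv0L r n (x ν • singleC1 ν (ψ ν)) = Pi.single ν (x ν) := by
    intro ν
    have e : dvC (singleC1 ν (ψ ν)) 0 = sCLM n ν (dvC (ψ ν) 0) := extFun_CMsingle ν _ 0
    rw [map_smul, dv0L_apply, e, h]
    ext j
    rw [Pi.smul_apply, sCLM_apply', Pi.single_apply]
    by_cases hj : j = ν <;> simp [hj]
  simp only [this]
  exact Finset.univ_sum_single x

lemma isOpen_WupJ (S : Setting r n kk F) (J : Finset (Fin kk)) : IsOpen (S.WupJ J) := by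
  have e : S.WupJ J = S.W ∩ ⋂ k, ⋂ (_ : k ∉ J), (S.W ∩ S.d k ⁻¹' Set.Ioi 0) := by
    ext w
    simp only [Setting.WupJ, Set.mem_ofPred_eq, Set.mem_inter_iff, Set.mem_iInter,
      Set.mem_preimage, Set.mem_Ioi]
    exact ⟨fun h => ⟨h.1, fun k hk => ⟨h.1, h.2 k hk⟩⟩, fun h => ⟨h.1, fun k hk => (h.2 k hk).2⟩⟩
  rw [e]
  refine S.Wopen.inter (isOpen_iInter_of_finite fun k => isOpen_iInter_of_finite fun _ => ?_)
  exact (S.d_smooth k).continuousOn.isOpen_inter_preimage S.Wopen isOpen_Ioi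

lemma contDiffOn_Ymap (S : Setting r n kk F) (J : Finset (Fin kk)) (y : Fin n → F → C1 r ℝ)
    (hy : ∀ ν, ContDiffOn ℝ 1 (y ν) (S.WupJ J)) {s : Set (C1 r (Fin n → ℝ))}
    (hs : ∀ φ ∈ s, S.Lof φ ∈ S.WupJ J) {c : C1 r (Fin n → ℝ) → Fin n → ℝ}
    (hc : ContDiffOn ℝ 1 c s) :
    ContDiffOn ℝ 1 (fun φ => Ymap (fun ν => y ν (S.Lof φ)) (c φ)) s := by
  show ContDiffOn ℝ 1 (fun φ => ∑ ν, c φ ν • singleL r ν (y ν (lofL S φ))) s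
  refine ContDiffOn.sum fun ν _ => ?_
  have h1 : ContDiffOn ℝ 1 (fun φ => c φ ν) s := contDiffOn_pi.1 hc ν
  have h2 : ContDiffOn ℝ 1 (fun φ => singleL r ν (y ν (lofL S φ))) s :=
    by
    have h3 : ContDiff ℝ 1 (⇑(lofL S)) :=
      ContinuousLinearMap.contDiff (𝕜 := ℝ) (E := C1 r (Fin n → ℝ)) (F := F) (n := 1) (lofL S)
    have h4 : ContDiff ℝ 1 (⇑(singleL r ν)) :=
      ContinuousLinearMap.contDiff (𝕜 := ℝ) (E := C1 r ℝ) (F := C1 r (Fin n → ℝ)) (n := 1)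
        (singleL r ν)
    have h5 : Set.MapsTo (lofL S) s (S.WupJ J) := hs
    exact h4.comp_contDiffOn ((hy ν).comp h3.contDiffOn h5)
  exact contDiffOn_smul_aux (X := C1 r (Fin n → ℝ)) (G := C1 r (Fin n → ℝ)) h1 h2

end helpers

variable {r : ℝ} {n kk : ℕ} {F : Type*} [NormedAddCommGroup F] [NormedSpace ℝ F]
  [FiniteDimensional ℝ F]

/-- Theorem 4.8. -/
theorem statement16 (hk : 0 < kk) (hr : 0 < r) (S : Setting r n kk F)
    (J : Finset (Fin kk)) (hJ : J ≠ Finset.univ) (hUJ : (S.UJ J).Nonempty)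
    (y : Fin n → F → C1 r ℝ)
    (hy_smooth : ∀ ν, ContDiffOn ℝ 1 (y ν) (S.WupJ J))
    (hy0 : ∀ ν, ∀ w ∈ S.WupJ J, evC (y ν w) 0 = 0)
    (hy1 : ∀ ν, ∀ w ∈ S.WupJ J, dvC (y ν w) 0 = 1)
    (hyL : ∀ ν, ∀ w ∈ S.WupJ J, S.L (singleC1 ν (y ν w)).1.1 = 0)
    (hyvan : ∀ ν, ∀ w ∈ S.WupJ J, ∀ k ∉ J, ∀ t ∈ Set.Icc (-r) (-(S.d k w)),
      evC (y ν w) t = 0)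
    (hyp : S.HypB ∨ S.HypD1B hk ∨ S.U = S.UJ J)
    (N O : Set (C1 r (Fin n → ℝ))) (σ : C1 r (Fin n → ℝ) → C1 r (Fin n → ℝ))
    (hO : IsOpen O) (hN : N = S.Xf ∩ O) (hsub : S.XfJ J ⊆ N)
    (hO' : ∃ O', IsOpen O' ∧ S.RJmap y '' N = (X0sub r n : Set (C1 r (Fin n → ℝ))) ∩ O')
    (hR1 : ContDiffOn ℝ 1 (S.RJmap y) N) (hinj : Set.InjOn (S.RJmap y) N)
    (hσ : ContDiffOn ℝ 1 σ (S.RJmap y '' N))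
    (hinv : Set.InvOn σ (S.RJmap y) N (S.RJmap y '' N)) :
    ∃ (OJ : Set (C1 r (Fin n → ℝ))) (AJ : C1 r (Fin n → ℝ) → C1 r (Fin n → ℝ)),
      IsOpen OJ ∧ S.XfJ J ⊆ S.Xf ∩ OJ ∧ S.Xf ∩ OJ ⊆ N ∧
      IsOpen (AJ '' OJ) ∧ IsC1DiffeoOn AJ OJ (AJ '' OJ) ∧
      (∀ φ ∈ S.Xf ∩ OJ, AJ φ = S.RJmap y φ) ∧
      (∀ χ ∈ (X0sub r n : Set (C1 r (Fin n → ℝ))) ∩ (S.Xf ∩ OJ), AJ χ = χ) ∧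
      AJ '' (S.Xf ∩ OJ) = (X0sub r n : Set (C1 r (Fin n → ℝ))) ∩ AJ '' OJ := by
  have hWo := isOpen_WupJ S J
  have lsub : ∀ a b, S.Lof (a - b) = S.Lof a - S.Lof b := fun a b => (lofL S).map_sub a b
  have ladd : ∀ a b, S.Lof (a + b) = S.Lof a + S.Lof b := fun a b => (lofL S).map_add a b
  have dsub : ∀ a b : C1 r (Fin n → ℝ), dvC (a - b) 0 = dvC a 0 - dvC b 0 :=
    fun a b => (dv0L r n).map_sub a b
  have dadd : ∀ a b : C1 r (Fin n → ℝ), dvC (a + b) 0 = dvC a 0 + dvC b 0 :=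
    fun a b => (dv0L r n).map_add a b
  have lY : ∀ w ∈ S.WupJ J, ∀ x, S.Lof (Ymap (fun ν => y ν w) x) = 0 :=
    fun w hw x => lof_Ymap S _ (fun ν => hyL ν w hw) x
  have dY : ∀ w ∈ S.WupJ J, ∀ x, dvC (Ymap (fun ν => y ν w) x) 0 = x :=
    fun w hw x => dv_Ymap _ (fun ν => hy1 ν w hw) x
  obtain ⟨O', hO'o, hRN⟩ := hO'
  have lR : ∀ φ, S.Lof φ ∈ S.WupJ J → S.Lof (S.RJmap y φ) = S.Lof φ := by
    intro φ hφ
    simp only [Setting.RJmap]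
    rw [lsub, lY _ hφ, sub_zero]
  have dR : ∀ φ, S.Lof φ ∈ S.WupJ J → dvC (S.RJmap y φ) 0 = 0 := by
    intro φ hφ
    simp only [Setting.RJmap]
    rw [dsub, dY _ hφ, sub_self]
  have RT : ∀ φ, S.Lof φ ∈ S.WupJ J → ∀ x, S.Lof (φ + Ymap (fun ν => y ν (S.Lof φ)) x) = S.Lof φ ∧
      S.RJmap y (φ + Ymap (fun ν => y ν (S.Lof φ)) x) = S.RJmap y φ := by
    intro φ hφ x
    have h1 : S.Lof (φ + Ymap (fun ν => y ν (S.Lof φ)) x) = S.Lof φ := by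
      rw [ladd, lY _ hφ, add_zero]
    refine ⟨h1, ?_⟩
    simp only [Setting.RJmap]
    rw [h1, dadd, dY _ hφ, map_add]
    abel
  set Ω₁ : Set (C1 r (Fin n → ℝ)) := {φ | S.Lof φ ∈ S.WupJ J} with hΩ₁
  have hΩ₁o : IsOpen Ω₁ := hWo.preimage (lofL S).continuous
  have hRs : ContDiffOn ℝ 1 (S.RJmap y) Ω₁ := by
    show ContDiffOn ℝ 1 (fun φ => φ - Ymap (fun ν => y ν (S.Lof φ)) (dvC φ 0)) Ω₁
    have hc : ContDiffOn ℝ 1 (fun φ : C1 r (Fin n → ℝ) => dvC φ 0) Ω₁ :=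
      contDiff_dv0.contDiffOn
    exact contDiffOn_id.sub (contDiffOn_Ymap S J y hy_smooth (fun φ h => h) hc)
  set Ω₂ : Set (C1 r (Fin n → ℝ)) := Ω₁ ∩ S.RJmap y ⁻¹' O' with hΩ₂
  have hΩ₂o : IsOpen Ω₂ := hRs.continuousOn.isOpen_inter_preimage hΩ₁o hO'o
  have hmaps : Set.MapsTo (S.RJmap y) Ω₂ (S.RJmap y '' N) := by
    intro φ hφ
    rw [hRN]
    exact ⟨dR φ hφ.1, hφ.2⟩
  have hσR : ContDiffOn ℝ 1 (fun φ => σ (S.RJmap y φ)) Ω₂ :=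
    hσ.comp (hRs.mono Set.inter_subset_left) hmaps
  set Ω₃ : Set (C1 r (Fin n → ℝ)) := Ω₂ ∩ (fun φ => σ (S.RJmap y φ)) ⁻¹' Ω₁ with hΩ₃
  have hΩ₃o : IsOpen Ω₃ := hσR.continuousOn.isOpen_inter_preimage hΩ₂o hΩ₁o
  set γ : C1 r (Fin n → ℝ) → Fin n → ℝ := fun φ => dvC (σ (S.RJmap y φ)) 0 with hγ
  have hγs : ContDiffOn ℝ 1 γ Ω₃ :=
    contDiff_dv0.comp_contDiffOn (hσR.mono Set.inter_subset_left)
  set A : C1 r (Fin n → ℝ) → C1 r (Fin n → ℝ) :=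
    fun φ => φ - Ymap (fun ν => y ν (S.Lof φ)) (γ φ) with hA
  set B : C1 r (Fin n → ℝ) → C1 r (Fin n → ℝ) :=
    fun φ => φ + Ymap (fun ν => y ν (S.Lof φ)) (γ φ) with hB
  have hYs : ContDiffOn ℝ 1 (fun φ => Ymap (fun ν => y ν (S.Lof φ)) (γ φ)) Ω₃ :=
    contDiffOn_Ymap S J y hy_smooth (fun φ h => h.1.1) hγs
  have hAs : ContDiffOn ℝ 1 A Ω₃ := contDiffOn_id.sub hYs
  have hBs : ContDiffOn ℝ 1 B Ω₃ := contDiffOn_id.add hYs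
  have hAe : ∀ φ, A φ = φ + Ymap (fun ν => y ν (S.Lof φ)) (-γ φ) := by
    intro φ; simp only [hA]; rw [map_neg, sub_eq_add_neg]
  have hAp : ∀ φ ∈ Ω₃, S.Lof (A φ) = S.Lof φ ∧ S.RJmap y (A φ) = S.RJmap y φ := by
    intro φ hφ; rw [hAe]; exact RT φ hφ.1.1 _
  have hBp : ∀ φ ∈ Ω₃, S.Lof (B φ) = S.Lof φ ∧ S.RJmap y (B φ) = S.RJmap y φ := by
    intro φ hφ; exact RT φ hφ.1.1 _
  have hinvar : ∀ φ ∈ Ω₃, ∀ ψ, S.Lof ψ = S.Lof φ ∧ S.RJmap y ψ = S.RJmap y φ → ψ ∈ Ω₃ := by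
    intro φ hφ ψ hψ
    refine ⟨⟨?_, ?_⟩, ?_⟩
    · show S.Lof ψ ∈ S.WupJ J
      rw [hψ.1]; exact hφ.1.1
    · show S.RJmap y ψ ∈ O'
      rw [hψ.2]; exact hφ.1.2
    · show σ (S.RJmap y ψ) ∈ Ω₁
      rw [hψ.2]; exact hφ.2
  have hAm : ∀ φ ∈ Ω₃, A φ ∈ Ω₃ := fun φ hφ => hinvar φ hφ _ (hAp φ hφ)
  have hBm : ∀ φ ∈ Ω₃, B φ ∈ Ω₃ := fun φ hφ => hinvar φ hφ _ (hBp φ hφ)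
  have hBA : ∀ φ ∈ Ω₃, B (A φ) = φ := by
    intro φ hφ
    have h := hAp φ hφ
    have hg : γ (A φ) = γ φ := by simp only [hγ]; rw [h.2]
    show A φ + Ymap (fun ν => y ν (S.Lof (A φ))) (γ (A φ)) = φ
    rw [h.1, hg]
    exact sub_add_cancel _ _
  have hAB : ∀ φ ∈ Ω₃, A (B φ) = φ := by
    intro φ hφ
    have h := hBp φ hφ
    have hg : γ (B φ) = γ φ := by simp only [hγ]; rw [h.2]
    show B φ - Ymap (fun ν => y ν (S.Lof (B φ))) (γ (B φ)) = φ
    rw [h.1, hg]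
    exact add_sub_cancel_right _ _
  have hAR : ∀ φ ∈ N, A φ = S.RJmap y φ := by
    intro φ hφ
    have : γ φ = dvC φ 0 := by simp only [hγ]; rw [hinv.1 hφ]
    simp only [hA, Setting.RJmap]; rw [this]
  have himg : A '' (Ω₃ ∩ O) = Ω₃ ∩ B ⁻¹' O := by
    ext ψ
    constructor
    · rintro ⟨φ, hφ, rfl⟩
      refine ⟨hAm φ hφ.1, ?_⟩
      show B (A φ) ∈ O
      rw [hBA φ hφ.1]; exact hφ.2
    · rintro ⟨h1, h2⟩
      exact ⟨B ψ, ⟨hBm ψ h1, h2⟩, hAB ψ h1⟩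
  have hXN : ∀ φ ∈ S.Xf ∩ (Ω₃ ∩ O), φ ∈ N := by
    intro φ hφ; rw [hN]; exact ⟨hφ.1, hφ.2.2⟩
  refine ⟨Ω₃ ∩ O, A, hΩ₃o.inter hO, ?_, hXN, ?_, ⟨hAs.mono Set.inter_subset_left, ?_, rfl, B, ?_, ?_, ?_⟩,
    fun φ hφ => hAR φ (hXN φ hφ), ?_, ?_⟩
  · intro φ hφ
    have hφN := hsub hφ
    have hL : S.Lof φ ∈ S.WupJ J := ⟨hφ.2.2.1, hφ.2.2.2.2⟩
    have hRO : S.RJmap y φ ∈ S.RJmap y '' N := ⟨φ, hφN, rfl⟩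
    refine ⟨hφ.1, ⟨⟨hL, ?_⟩, ?_⟩, ?_⟩
    · rw [hRN] at hRO; exact hRO.2
    · show σ (S.RJmap y φ) ∈ Ω₁
      rw [hinv.1 hφN]; exact hL
    · rw [hN] at hφN; exact hφN.2
  · rw [himg]
    exact hBs.continuousOn.isOpen_inter_preimage hΩ₃o hO
  · intro a ha b hb hab
    rw [← hBA a ha.1, ← hBA b hb.1, hab]
  · rw [himg]; exact hBs.mono Set.inter_subset_left
  · intro φ hφ; exact hBA φ hφ.1
  · intro φ hφ
    rw [himg] at hφ; exact hAB φ hφ.1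
  · intro χ hχ
    rw [hAR χ (hXN χ hχ.2)]
    have h0 : dvC χ 0 = 0 := hχ.1
    simp only [Setting.RJmap]
    rw [h0, map_zero, sub_zero]
  · ext ψ
    constructor
    · rintro ⟨φ, hφ, rfl⟩
      refine ⟨?_, φ, hφ.2, rfl⟩
      rw [hAR φ (hXN φ hφ)]
      exact dR φ hφ.2.1.1.1
    · rintro ⟨h0, φ, hφ, rfl⟩
      refine ⟨φ, ⟨?_, hφ⟩, rfl⟩
      have h0' : dvC (A φ) 0 = 0 := h0
      have hL : S.Lof φ ∈ S.WupJ J := hφ.1.1.1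
      have hd : dvC φ 0 = γ φ := by
        simp only [hA] at h0'
        rw [dsub, dY _ hL] at h0'
        exact sub_eq_zero.1 h0'
      obtain ⟨φ₀, hφ₀, he⟩ := hmaps hφ.1.1
      have hs : σ (S.RJmap y φ) = φ₀ := by rw [← he]; exact hinv.1 hφ₀
      have hL₀ : S.Lof φ₀ ∈ S.WupJ J := by
        have := hφ.1.2
        rw [← hs]; exact this
      have hd₀ : dvC φ 0 = dvC φ₀ 0 := by rw [hd]; simp only [hγ]; rw [hs]
      have hLe : S.Lof φ₀ = S.Lof φ := by rw [← lR φ₀ hL₀, he, lR φ hL]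
      have hEq : φ₀ = φ := by
        simp only [Setting.RJmap] at he
        rw [hLe, hd₀] at he
        exact sub_left_injective he
      rw [← hEq]
      rw [hN] at hφ₀
      exact hφ₀.1
end
end

section
/- If A:𝒪→E is an almost graph diffeomorphism associated with 𝒪, X, and H, then X∩𝒪 is an almost graph over H: with dom = A(X∩𝒪) = H∩A(𝒪) and α:H⊃dom→E defined by α(ζ) = A^{-1}(ζ) − ζ, the map α is continuously differentiable with α(ζ)=0 on dom∩(X∩𝒪), α(ζ)∈E∖H on dom∖(X∩𝒪), and dom∋ζ↦ζ+α(ζ)∈E defines a diffeomorphism onto X∩𝒪. -/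
set_option linter.unusedSectionVars false

open Set

noncomputable section

/-- Almost graph diffeomorphisms yield almost graphs (the remark in Section 1). -/
theorem statement17 {E : Type*} [NormedAddCommGroup E] [NormedSpace ℝ E]
    (X : Set E) (hX : IsC1Submanifold X) (O : Set E) (hO : IsOpen O)
    (hne : (X ∩ O).Nonempty)
    (H : Submodule ℝ E) (hHc : IsClosed (H : Set E))
    (hQ : ∃ Q : Submodule ℝ E, IsCompl H Q ∧ IsClosed (Q : Set E))
    (A Ainv : E → E)
    (hA1 : ContDiffOn ℝ 1 A O) (hAinj : Set.InjOn A O) (hAopen : IsOpen (A '' O))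
    (hAinv1 : ContDiffOn ℝ 1 Ainv (A '' O)) (hAinv2 : Set.InvOn Ainv A O (A '' O))
    (hag1 : A '' (X ∩ O) = (H : Set E) ∩ A '' O)
    (hag2 : ∀ ζ ∈ (H : Set E) ∩ (X ∩ O), A ζ = ζ) :
    A '' (X ∩ O) = (H : Set E) ∩ A '' O ∧
    ContDiffOn ℝ 1 (fun ζ => Ainv ζ - ζ) (A '' (X ∩ O)) ∧
    (∀ ζ ∈ (A '' (X ∩ O)) ∩ (X ∩ O), Ainv ζ - ζ = 0) ∧
    (∀ ζ ∈ (A '' (X ∩ O)) \ (X ∩ O), Ainv ζ - ζ ∉ (H : Set E)) ∧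
    IsC1DiffeoOn (fun ζ => ζ + (Ainv ζ - ζ)) (A '' (X ∩ O)) (X ∩ O) ∧
    IsAlmostGraphOver (X ∩ O) (H : Set E) := by
  have hsub : A '' (X ∩ O) ⊆ A '' O := Set.image_mono Set.inter_subset_right
  have hH : A '' (X ∩ O) ⊆ (H : Set E) := by
    rw [hag1]; exact Set.inter_subset_left
  have hl : ∀ x ∈ X ∩ O, Ainv (A x) = x := fun x hx => hAinv2.1 hx.2
  have hC : ContDiffOn ℝ 1 (fun ζ => Ainv ζ - ζ) (A '' (X ∩ O)) :=
    (hAinv1.mono hsub).sub contDiffOn_id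
  have h0 : ∀ ζ ∈ (A '' (X ∩ O)) ∩ (X ∩ O), Ainv ζ - ζ = 0 := by
    rintro ζ ⟨hζ1, hζ2⟩
    have h1 : A ζ = ζ := hag2 ζ ⟨hH hζ1, hζ2⟩
    have h2 := hl ζ hζ2
    rw [h1] at h2
    rw [h2, sub_self]
  have h1 : ∀ ζ ∈ (A '' (X ∩ O)) \ (X ∩ O), Ainv ζ - ζ ∉ (H : Set E) := by
    rintro ζ ⟨hζ1, hζ2⟩ hmem
    have hζH : ζ ∈ H := hH hζ1
    obtain ⟨x, hx, rfl⟩ := hζ1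
    rw [hl x hx] at hmem
    have hxH : x ∈ H := by
      have := H.add_mem hmem hζH
      rwa [sub_add_cancel] at this
    apply hζ2
    rw [hag2 x ⟨hxH, hx⟩]
    exact hx
  have hD : IsC1DiffeoOn (fun ζ => ζ + (Ainv ζ - ζ)) (A '' (X ∩ O)) (X ∩ O) := by
    have hfun : (fun ζ => ζ + (Ainv ζ - ζ)) = Ainv := by
      funext ζ; exact add_sub_cancel ζ (Ainv ζ)
    rw [hfun]
    refine ⟨hAinv1.mono hsub, ?_, ?_, A, hA1.mono Set.inter_subset_right, ?_, ?_⟩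
    · rintro _ ⟨x, hx, rfl⟩ _ ⟨y, hy, rfl⟩ h
      rw [hl x hx, hl y hy] at h
      rw [h]
    · ext y
      constructor
      · rintro ⟨_, ⟨x, hx, rfl⟩, rfl⟩
        rw [hl x hx]; exact hx
      · intro hy
        exact ⟨A y, ⟨y, hy, rfl⟩, hl y hy⟩
    · intro ζ hζ
      exact hAinv2.2 (hsub hζ)
    · intro x hx
      exact hl x hx
  exact ⟨hag1, hC, h0, h1, hD, A '' (X ∩ O), fun ζ => Ainv ζ - ζ, hH, hC, h0, h1, hD⟩
end
end

section
/- Suppose one of the hypotheses (b), (d1b) is satisfied. Then the solution manifold X_f is the union, over all J⊂K with U_J≠∅, of the mutually disjoint nonempty sets X_{fJ}, and X_f possesses a finite atlas of at most 2^𝐤 manifold charts: for each J⊂K with U_J≠∅ there is an open subset N_J of X_f containing X_{fJ} which is an almost graph over X_0 and on which a manifold chart with values in the open subset R^J(N_J) (respectively R^K N_K when J=K) of X_0 is defined; the number of charts equals #{J⊂K : U_J≠∅} ≤ 2^𝐤. -/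
set_option linter.unusedSectionVars false

open Set

noncomputable section

section lemmaA
open Filter Topology
variable {A B : Type*} [NormedAddCommGroup A] [NormedSpace ℝ A] [NormedAddCommGroup B]
  [NormedSpace ℝ B]

/-- Set of parameters and values on which the fixed point equation is uniquely solvable. -/
def Qset (V : Set A) (g : A → B) : Set ((A × (B →L[ℝ] A)) × B) :=
  {p | ∃ (δ : ℝ) (M : NNReal), Metric.ball p.1.1 δ ⊆ V ∧
    LipschitzOnWith M g (Metric.ball p.1.1 δ) ∧ ‖p.1.2‖ * M < 1 ∧ ‖p.1.2 p.2‖ < δ}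

lemma Qset_isOpen (V : Set A) (g : A → B) : IsOpen (Qset V g) := by
  rw [isOpen_iff_mem_nhds]
  rintro p ⟨δ, M, h1, h2, h3, h4⟩
  have c1 : Continuous fun q : (A × (B →L[ℝ] A)) × B => dist q.1.1 p.1.1 + ‖q.1.2 q.2‖ := by
    fun_prop
  have c2 : Continuous fun q : (A × (B →L[ℝ] A)) × B => ‖q.1.2‖ * M := by fun_prop
  have e1 := c1.continuousAt.eventually_lt (x₀ := p) continuousAt_const
    (show dist p.1.1 p.1.1 + ‖p.1.2 p.2‖ < δ by simpa using h4)
  have e2 := c2.continuousAt.eventually_lt (x₀ := p) continuousAt_const h3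
  filter_upwards [e1, e2] with q hq1 hq2
  have hs : Metric.ball q.1.1 (δ - dist q.1.1 p.1.1) ⊆ Metric.ball p.1.1 δ :=
    Metric.ball_subset_ball' (by linarith)
  exact ⟨δ - dist q.1.1 p.1.1, M, hs.trans h1, h2.mono hs, hq2, by linarith⟩

/-- `x` is the solution of the fixed point equation with parameter `z`. -/
def SolQ (V : Set A) (g : A → B) (z : A × (B →L[ℝ] A)) (x : B) : Prop :=
  (z, x) ∈ Qset V g ∧ x = g (z.1 + z.2 x)

lemma SolQ_mem {V : Set A} {g : A → B} {z : A × (B →L[ℝ] A)} {x : B}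
    (h : (z, x) ∈ Qset V g) : z.1 + z.2 x ∈ V := by
  obtain ⟨δ, M, h1, h2, h3, h4⟩ := h
  exact h1 (by simpa using h4)

lemma SolQ_unique {V : Set A} {g : A → B} {z : A × (B →L[ℝ] A)} {x x' : B}
    (h : SolQ V g z x) (h' : SolQ V g z x') : x = x' := by
  obtain ⟨⟨δ, M, h1, h2, h3, h4⟩, h5⟩ := h
  obtain ⟨⟨δ', M', h1', h2', h3', h4'⟩, h5'⟩ := h'
  simp only at *
  have key : ∀ (δ : ℝ) (M : NNReal), LipschitzOnWith M g (Metric.ball z.1 δ) → ‖z.2‖ * M < 1 →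
      ‖z.2 x‖ < δ → ‖z.2 x'‖ < δ → x = x' := by
    intro δ M hL hM hx hx'
    by_contra hne
    have hd := hL.dist_le_mul (z.1 + z.2 x) (by simpa using hx) (z.1 + z.2 x') (by simpa using hx')
    rw [← h5, ← h5', dist_add_left, dist_eq_norm, dist_eq_norm, ← map_sub] at hd
    have h7 := z.2.le_opNorm (x - x')
    have h8 : 0 < ‖x - x'‖ := norm_pos_iff.2 (sub_ne_zero.2 hne)
    have h9 : (M:ℝ) * ‖z.2 (x - x')‖ ≤ M * (‖z.2‖ * ‖x - x'‖) := by gcongr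
    nlinarith
  rcases le_total δ δ' with h | h
  · exact key δ' M' h2' h3' (h4.trans_le h) h4'
  · exact key δ M h2 h3 h4 (h4'.trans_le h)

variable [CompleteSpace A] [CompleteSpace B]

lemma SolQ_local {V : Set A} (hVo : IsOpen V) {g : A → B} (hg : ContDiffOn ℝ 1 g V)
    {z : A × (B →L[ℝ] A)} {x : B}
    (h : SolQ V g z x) : ∃ ψ : A × (B →L[ℝ] A) → B, ContDiffAt ℝ 1 ψ z ∧
      ∀ᶠ z' in 𝓝 z, SolQ V g z' (ψ z') := by
  let u : (A × (B →L[ℝ] A)) × B := (z, x)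
  let G : (A × (B →L[ℝ] A)) × B → B := fun p => p.2 - g (p.1.1 + p.1.2 p.2)
  have hmem := SolQ_mem h.1
  have hgat : ContDiffAt ℝ 1 g (z.1 + z.2 x) := hg.contDiffAt (hVo.mem_nhds hmem)
  have hin : ContDiff ℝ 1 (fun p : (A × (B →L[ℝ] A)) × B => p.1.1 + p.1.2 p.2) :=
    (contDiff_fst.comp contDiff_fst).add
      ((contDiff_snd.comp contDiff_fst).clm_apply contDiff_snd)
  have cdG : ContDiffAt ℝ 1 G u :=
    contDiffAt_snd.sub (ContDiffAt.comp u (by exact hgat) hin.contDiffAt)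
  have hGu : G u = 0 := sub_eq_zero.2 h.2
  have hinv : (fderiv ℝ G u ∘L .inr ℝ _ _).IsInvertible := by
    obtain ⟨⟨δ, M, h1, h2, h3, h4⟩, h5⟩ := h
    simp only at h1 h2 h3 h4
    have hgd := (hgat.differentiableAt (by simp)).hasFDerivAt
    have hM : ‖fderiv ℝ g (z.1 + z.2 x)‖ ≤ M :=
      hgd.le_of_lipschitzOn (Metric.isOpen_ball.mem_nhds (by simpa using h4)) h2
    have e : fderiv ℝ G u ∘L .inr ℝ _ _ = 1 - fderiv ℝ g (z.1 + z.2 x) ∘L z.2 := by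
      have a1 : HasFDerivAt (fun y : B => ((z, y) : (A × (B →L[ℝ] A)) × B)) (.inr ℝ _ _) x :=
        hasFDerivAt_prodMk_right z x
      have a2 : HasFDerivAt (fun y : B => G (z, y)) (fderiv ℝ G u ∘L .inr ℝ _ _) x :=
        HasFDerivAt.comp x (g := G) ((cdG.differentiableAt (by simp)).hasFDerivAt) a1
      have a3 : HasFDerivAt (fun y : B => z.1 + z.2 y) z.2 x := z.2.hasFDerivAt.const_add _
      have a4 : HasFDerivAt (fun y : B => G (z, y)) (1 - fderiv ℝ g (z.1 + z.2 x) ∘L z.2) x :=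
        (hasFDerivAt_id x).sub (HasFDerivAt.comp x (g := g) hgd a3)
      exact a2.unique a4
    rw [e]
    have hn : ‖fderiv ℝ g (z.1 + z.2 x) ∘L z.2‖ < 1 := by
      refine (ContinuousLinearMap.opNorm_comp_le _ _).trans_lt ?_
      have := mul_le_mul_of_nonneg_right hM (norm_nonneg z.2)
      linarith [mul_comm ‖z.2‖ (M:ℝ)]
    have hu : IsUnit (1 - fderiv ℝ g (z.1 + z.2 x) ∘L z.2) := isUnit_one_sub_of_norm_lt_one hn
    obtain ⟨u1, hu1⟩ := hu
    exact ⟨ContinuousLinearEquiv.ofUnit u1, by rw [← hu1]; rfl⟩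
  refine ⟨cdG.implicitFunction one_ne_zero hinv, cdG.contDiffAt_implicitFunction one_ne_zero hinv, ?_⟩
  have hc := (cdG.contDiffAt_implicitFunction one_ne_zero hinv).continuousAt
  have hc2 : ContinuousAt (fun z' => ((z', cdG.implicitFunction one_ne_zero hinv z') :
      (A × (B →L[ℝ] A)) × B)) z := continuousAt_id.prodMk hc
  have hself : cdG.implicitFunction one_ne_zero hinv z = x :=
    cdG.implicitFunction_apply_self one_ne_zero hinv
  have hQ := hc2.preimage_mem_nhds ((Qset_isOpen V g).mem_nhds (by rw [hself]; exact h.1))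
  filter_upwards [hQ, cdG.eventually_apply_implicitFunction one_ne_zero hinv] with z' h1 h2
  refine ⟨h1, ?_⟩
  rw [hGu] at h2
  exact sub_eq_zero.1 h2

lemma SolQ_global {V : Set A} (hVo : IsOpen V) {g : A → B} (hg : ContDiffOn ℝ 1 g V) :
    ∃ (D : Set (A × (B →L[ℝ] A))) (h : A × (B →L[ℝ] A) → B), IsOpen D ∧ ContDiffOn ℝ 1 h D ∧
      (∀ z ∈ D, SolQ V g z (h z)) ∧ ∀ z x, SolQ V g z x → z ∈ D ∧ h z = x := by
  classical
  let h : A × (B →L[ℝ] A) → B := fun z => if hz : ∃ x, SolQ V g z x then hz.choose else 0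
  have hh : ∀ z x, SolQ V g z x → h z = x := by
    intro z x hx
    have hz : ∃ x, SolQ V g z x := ⟨x, hx⟩
    simp only [h, dif_pos hz]
    exact SolQ_unique hz.choose_spec hx
  refine ⟨{z | ∃ x, SolQ V g z x}, h, ?_, ?_, ?_, fun z x hx => ⟨⟨x, hx⟩, hh z x hx⟩⟩
  · rw [isOpen_iff_mem_nhds]
    rintro z ⟨x, hx⟩
    obtain ⟨ψ, _, h2⟩ := SolQ_local hVo hg hx
    filter_upwards [h2] with z' hz' using ⟨_, hz'⟩
  · rintro z ⟨x, hx⟩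
    obtain ⟨ψ, h1, h2⟩ := SolQ_local hVo hg hx
    refine (h1.congr_of_eventuallyEq ?_).contDiffWithinAt
    filter_upwards [h2] with z' hz' using hh _ _ hz'
  · rintro z ⟨x, hx⟩
    rw [hh z x hx]; exact hx

lemma Qset_zero {V : Set A} (hVo : IsOpen V) {g : A → B} (hg : ContDiffOn ℝ 1 g V) {v : A}
    (hv : v ∈ V) (x : B) : ((v, (0 : B →L[ℝ] A)), x) ∈ Qset V g := by
  obtain ⟨M, t, ht, hL⟩ := (hg.contDiffAt (hVo.mem_nhds hv)).exists_lipschitzOnWith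
  obtain ⟨δ, hδ, hs⟩ := Metric.mem_nhds_iff.1 (Filter.inter_mem ht (hVo.mem_nhds hv))
  exact ⟨δ, M, hs.trans inter_subset_right, hL.mono (hs.trans inter_subset_left), by simp, by simpa⟩

end lemmaA
section lemmaB
open Filter Topology
variable {r : ℝ} {E : Type*} [NormedAddCommGroup E] [NormedSpace ℝ E]

lemma norm_extFun_le (φ : C(Icc0 r, E)) (t : ℝ) : ‖extFun φ t‖ ≤ ‖φ‖ := by
  by_cases h : t ∈ Icc0 r
  · simpa [extFun, h] using φ.norm_coe_le_norm ⟨t, h⟩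
  · simp [extFun, h]

/-- Evaluation at `t` as a continuous linear map. -/
def evL (r : ℝ) (E : Type*) [NormedAddCommGroup E] [NormedSpace ℝ E] (t : ℝ) : C1 r E →L[ℝ] E :=
  LinearMap.mkContinuous
    { toFun := fun φ => evC φ t
      map_add' := fun φ ψ => by simp [evC, extFun_add]
      map_smul' := fun c φ => by simp [evC, extFun_smul] } 1
    (fun φ => by
      have h1 := norm_extFun_le φ.1.1 t
      have h2 : ‖φ.1.1‖ ≤ ‖φ.1‖ := norm_fst_le _
      rw [one_mul]; exact h1.trans h2)

/-- Evaluation of the derivative at `t` as a continuous linear map. -/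
def dvL (r : ℝ) (E : Type*) [NormedAddCommGroup E] [NormedSpace ℝ E] (t : ℝ) : C1 r E →L[ℝ] E :=
  LinearMap.mkContinuous
    { toFun := fun φ => dvC φ t
      map_add' := fun φ ψ => by simp [dvC, extFun_add]
      map_smul' := fun c φ => by simp [dvC, extFun_smul] } 1
    (fun φ => by
      have h1 := norm_extFun_le φ.1.2 t
      have h2 : ‖φ.1.2‖ ≤ ‖φ.1‖ := norm_snd_le _
      rw [one_mul]; exact h1.trans h2)

@[simp] lemma evL_apply (t : ℝ) (φ : C1 r E) : evL r E t φ = evC φ t := rfl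
@[simp] lemma dvL_apply (t : ℝ) (φ : C1 r E) : dvL r E t φ = dvC φ t := rfl

/-- Restriction of a `C¹` function on the line. -/
def mkC1 (r : ℝ) (f f' : ℝ → E) (hf : ∀ t, HasDerivAt f (f' t) t) (hf' : Continuous f') : C1 r E :=
  ⟨(⟨fun t => f t, (continuous_iff_continuousAt.2 fun t => (hf t).continuousAt).comp
      continuous_subtype_val⟩, ⟨fun t => f' t, hf'.comp continuous_subtype_val⟩), by
    intro t ht
    have e : extFun (r := r) (⟨fun t => f' t, hf'.comp continuous_subtype_val⟩ : C(Icc0 r, E)) t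
        = f' t := by simp only [extFun, dif_pos ht]; rfl
    rw [e]
    refine (hf t).hasDerivWithinAt.congr (fun s hs => ?_) ?_
    · simp only [extFun, dif_pos hs]; rfl
    · simp only [extFun, dif_pos ht]; rfl⟩

lemma evC_mkC1 {f f' : ℝ → E} (hf : ∀ t, HasDerivAt f (f' t) t) (hf' : Continuous f') {t : ℝ}
    (ht : t ∈ Icc0 r) : evC (mkC1 r f f' hf hf') t = f t := by
  simp only [evC, mkC1, extFun, dif_pos ht]; rfl

lemma dvC_mkC1 {f f' : ℝ → E} (hf : ∀ t, HasDerivAt f (f' t) t) (hf' : Continuous f') {t : ℝ}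
    (ht : t ∈ Icc0 r) : dvC (mkC1 r f f' hf hf') t = f' t := by
  simp only [dvC, mkC1, extFun, dif_pos ht]; rfl

lemma exists_bump (hr : 0 < r) {ε : ℝ} (hε : 0 < ε) (x : E) : ∃ φ : C1 r E,
    evC φ 0 = 0 ∧ dvC φ 0 = x ∧ (∀ u ∈ Icc0 r, u ≤ -ε → evC φ u = 0) ∧ ‖φ.1.1‖ ≤ ε * ‖x‖ := by
  let b : ℝ → ℝ := fun t => t * Real.smoothTransition (1 + t / ε)
  have hb : ContDiff ℝ 1 b := by
    have : ContDiff ℝ 1 Real.smoothTransition := Real.smoothTransition.contDiff (n := 1)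
    exact contDiff_id.mul (this.comp (contDiff_const.add (contDiff_id.div_const ε)))
  have hd : ∀ t, HasDerivAt b (deriv b t) t := fun t =>
    (hb.differentiable (by simp) t).hasDerivAt
  have hd0 : deriv b 0 = 1 := by
    have hs : HasDerivAt (fun t => Real.smoothTransition (1 + t / ε))
        (deriv (fun t => Real.smoothTransition (1 + t / ε)) 0) 0 := by
      have : ContDiff ℝ 1 Real.smoothTransition := Real.smoothTransition.contDiff (n := 1)
      exact ((this.comp (contDiff_const.add (contDiff_id.div_const ε))).differentiable
        (by simp) 0).hasDerivAt
    have := ((hasDerivAt_id (0:ℝ)).mul hs).deriv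
    exact this.trans (by simp)
  have hneg : ∀ t, t ≤ -ε → b t = 0 := by
    intro t ht
    have : 1 + t / ε ≤ 0 := by
      have : t / ε ≤ -1 := by rw [div_le_iff₀ hε]; linarith
      linarith
    simp [b, Real.smoothTransition.zero_of_nonpos this]
  have hbd : ∀ t ≤ 0, |b t| ≤ ε := by
    intro t ht
    rcases le_total t (-ε) with h | h
    · rw [hneg t h]; simpa using hε.le
    · have h1 := Real.smoothTransition.le_one (1 + t / ε)
      have h2 := Real.smoothTransition.nonneg (1 + t / ε)
      have h3 : |t| ≤ ε := abs_le.2 ⟨h, by linarith⟩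
      simp only [b, abs_mul, abs_of_nonneg h2]
      nlinarith [abs_nonneg t]
  have h0 : (0:ℝ) ∈ Icc0 r := ⟨by linarith, le_rfl⟩
  have hF : ∀ t, HasDerivAt (fun t => b t • x) (deriv b t • x) t := fun t => (hd t).smul_const x
  have hF' : Continuous fun t => deriv b t • x :=
    (hb.continuous_deriv (by simp)).smul continuous_const
  refine ⟨mkC1 r _ _ hF hF', ?_, ?_, ?_, ?_⟩
  · rw [evC_mkC1 hF hF' h0]; simp [b]
  · rw [dvC_mkC1 hF hF' h0]; simp [hd0]
  · intro u hu hu'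
    rw [evC_mkC1 hF hF' hu]; simp [hneg u hu']
  · rw [ContinuousMap.norm_le _ (by positivity)]
    intro t
    change ‖b t • x‖ ≤ _
    rw [norm_smul]
    gcongr
    exact hbd t t.2.2

end lemmaB
section lemmaC
open Filter Topology

/-- An abstract version of the space `C¹([-r,0],E)`. -/
structure AbsC1 (r : ℝ) (X E : Type*) [NormedAddCommGroup X] [NormedSpace ℝ X]
    [NormedAddCommGroup E] [NormedSpace ℝ E] where
  ev : ℝ → X →L[ℝ] E
  dv : ℝ → X →L[ℝ] E
  hdv : ∀ t φ, ‖dv t φ‖ ≤ ‖φ‖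
  hder : ∀ φ, ∀ t ∈ Icc0 r, HasDerivWithinAt (fun s => ev s φ) (dv t φ) (Icc0 r) t
  hdvc : ∀ φ, ContinuousOn (fun t => dv t φ) (Icc0 r)

variable {r : ℝ} {X E : Type*} [NormedAddCommGroup X] [NormedSpace ℝ X]
    [NormedAddCommGroup E] [NormedSpace ℝ E] (T : AbsC1 r X E)

namespace AbsC1

lemma ev_lip (φ : X) {s t : ℝ} (hs : s ∈ Icc0 r) (ht : t ∈ Icc0 r) :
    ‖T.ev t φ - T.ev s φ‖ ≤ ‖φ‖ * ‖t - s‖ :=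
  Convex.norm_image_sub_le_of_norm_hasDerivWithin_le (f := fun s => T.ev s φ)
    (f' := fun s => T.dv s φ) (fun x hx => T.hder φ x hx) (fun x _ => T.hdv x φ)
    (convex_Icc _ _) hs ht

lemma ev_continuousOn : ContinuousOn T.ev (Icc0 r) := by
  have : LipschitzOnWith 1 T.ev (Icc0 r) := by
    refine LipschitzOnWith.of_dist_le_mul fun t ht s hs => ?_
    rw [dist_eq_norm, dist_eq_norm]
    refine ContinuousLinearMap.opNorm_le_bound _ (by positivity) fun φ => ?_
    have := T.ev_lip φ hs ht
    simpa [mul_comm] using this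
  exact this.continuousOn

lemma dv_continuousOn :
    ContinuousOn (fun p : X × ℝ => T.dv p.2 p.1) (univ ×ˢ Icc0 r) := by
  rintro ⟨φ, t⟩ ⟨-, ht⟩
  have h1 : Tendsto (fun p : X × ℝ => T.dv p.2 φ) (𝓝[univ ×ˢ Icc0 r] (φ, t)) (𝓝 (T.dv t φ)) :=
    ((T.hdvc φ).comp continuousOn_snd (fun p hp => hp.2) : ContinuousOn
      (fun p : X × ℝ => T.dv p.2 φ) (univ ×ˢ Icc0 r)) (φ, t) ⟨mem_univ _, ht⟩
  have h2 : Tendsto (fun p : X × ℝ => T.dv p.2 (p.1 - φ)) (𝓝[univ ×ˢ Icc0 r] (φ, t)) (𝓝 0) := by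
    refine squeeze_zero_norm (fun p => T.hdv p.2 (p.1 - φ)) ?_
    have : Continuous fun p : X × ℝ => ‖p.1 - φ‖ := by fun_prop
    have := (this.tendsto (φ, t)).mono_left (nhdsWithin_le_nhds (s := univ ×ˢ Icc0 r))
    simpa using this
  have h3 := h1.add h2
  rw [add_zero] at h3
  refine h3.congr fun p => ?_
  rw [map_sub]; abel

lemma ev_contDiffOn :
    ContDiffOn ℝ 1 (fun p : X × ℝ => T.ev p.2 p.1) (univ ×ˢ Icc0 r) := by
  rw [show (1 : WithTop ℕ∞) = 0 + 1 by simp]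
  rw [contDiffOn_succ_iff_hasFDerivWithinAt (by simp)]
  intro p hp
  refine ⟨univ ×ˢ Icc0 r, ?_, by simp, fun p =>
    (T.ev p.2).comp (.fst ℝ _ _) +
      (ContinuousLinearMap.toSpanSingleton ℝ (T.dv p.2 p.1)).comp (.snd ℝ _ _), ?_, ?_⟩
  · rw [insert_eq_of_mem hp]; exact self_mem_nhdsWithin
  · rintro ⟨φ, t⟩ ⟨-, ht⟩
    simp only at ht
    have h1 : HasFDerivWithinAt (fun p : X × ℝ => T.ev p.2 φ)
        ((ContinuousLinearMap.toSpanSingleton ℝ (T.dv t φ)).comp (.snd ℝ _ _))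
        (univ ×ˢ Icc0 r) (φ, t) :=
      HasFDerivWithinAt.comp (φ, t) (g := fun s => T.ev s φ) (t := Icc0 r) (f := Prod.snd)
        (T.hder φ t ht).hasFDerivWithinAt hasFDerivWithinAt_snd (fun q hq => hq.2)
    have h2 : HasFDerivWithinAt (fun p : X × ℝ => T.ev t (p.1 - φ))
        ((T.ev t).comp (.fst ℝ _ _)) (univ ×ˢ Icc0 r) (φ, t) :=
      (T.ev t).hasFDerivAt.comp_hasFDerivWithinAt (f := fun p : X × ℝ => p.1 - φ) (φ, t)
        (hasFDerivWithinAt_fst.sub_const φ)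
    have h3 : HasFDerivWithinAt (fun p : X × ℝ => T.ev p.2 (p.1 - φ) - T.ev t (p.1 - φ))
        (0 : X × ℝ →L[ℝ] E) (univ ×ˢ Icc0 r) (φ, t) := by
      rw [hasFDerivWithinAt_iff_isLittleO]
      simp only [sub_self, map_zero, sub_zero, ContinuousLinearMap.zero_apply]
      rw [Asymptotics.isLittleO_iff]
      intro c hc
      have hnear : ∀ᶠ p : X × ℝ in 𝓝[univ ×ˢ Icc0 r] (φ, t), ‖p - (φ, t)‖ < c := by
        apply mem_nhdsWithin_of_mem_nhds
        filter_upwards [Metric.ball_mem_nhds (φ, t) hc] with p hp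
        simpa [dist_eq_norm] using hp
      filter_upwards [hnear, self_mem_nhdsWithin] with p hp1 hp2
      have a := T.ev_lip (p.1 - φ) ht hp2.2
      have b1 : ‖p.1 - φ‖ ≤ ‖p - (φ, t)‖ := norm_fst_le (p - (φ, t))
      have b2 : ‖p.2 - t‖ ≤ ‖p - (φ, t)‖ := norm_snd_le (p - (φ, t))
      refine a.trans ?_
      gcongr
      exact b1.trans hp1.le
    have h4 := (h1.add h2).add h3
    refine HasFDerivWithinAt.congr' (h4.congr_fderiv ?_) (fun p _ => ?_) ⟨mem_univ _, ht⟩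
    · rw [add_zero, add_comm]
    · simp only [Pi.add_apply, map_sub]
      abel
  · rw [contDiffOn_zero]
    refine ContinuousOn.add ?_ ?_
    · have : ContinuousOn (fun p : X × ℝ => T.ev p.2) (univ ×ˢ Icc0 r) :=
        T.ev_continuousOn.comp continuousOn_snd (fun p hp => hp.2)
      exact this.clm_comp continuousOn_const
    · have h1 : ContinuousOn (fun p : X × ℝ =>
          ContinuousLinearMap.toSpanSingletonCLE (𝕜 := ℝ) (E := E) (T.dv p.2 p.1))
          (univ ×ˢ Icc0 r) :=
        (ContinuousLinearMap.toSpanSingletonCLE (𝕜 := ℝ) (E := E)).continuous.comp_continuousOn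
          T.dv_continuousOn
      exact ContinuousOn.clm_comp h1 continuousOn_const

variable {F : Type*} [NormedAddCommGroup F] [NormedSpace ℝ F]

/-- The conditions on `Y` for the scale `e^s`. -/
def Ycond (L : X →L[ℝ] F) (s : ℝ) : Set (E →L[ℝ] X) :=
  {Y | ∀ x, T.ev 0 (Y x) = 0 ∧ T.dv 0 (Y x) = x ∧ L (Y x) = 0 ∧
    ∀ u ∈ Icc0 r, u ≤ -Real.exp s → T.ev u (Y x) = 0}

lemma Ycond_convex (L : X →L[ℝ] F) (s : ℝ) : Convex ℝ (T.Ycond L s) := by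
  intro Y hY Z hZ a b ha hb hab x
  obtain ⟨y1, y2, y3, y4⟩ := hY x
  obtain ⟨z1, z2, z3, z4⟩ := hZ x
  have e : (a • Y + b • Z) x = a • Y x + b • Z x := by simp
  rw [e]
  refine ⟨?_, ?_, ?_, ?_⟩
  · simp [y1, z1]
  · simp only [map_add, map_smul, y2, z2, ← add_smul, hab, one_smul]
  · simp [y3, z3]
  · intro u hu hu'
    simp [y4 u hu hu', z4 u hu hu']

variable [FiniteDimensional ℝ E] [FiniteDimensional ℝ F]

lemma Ycond_exists (L : X →L[ℝ] F)
    (hbump : ∀ x : E, ∀ ε > 0, ∀ η > 0, ∃ φ : X, T.ev 0 φ = 0 ∧ T.dv 0 φ = x ∧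
      (∀ u ∈ Icc0 r, u ≤ -ε → T.ev u φ = 0) ∧ ‖L φ‖ < η) (s : ℝ) : (T.Ycond L s).Nonempty := by
  let Z : Submodule ℝ X :=
    { carrier := {φ | T.ev 0 φ = 0 ∧ ∀ u ∈ Icc0 r, u ≤ -Real.exp s → T.ev u φ = 0}
      add_mem' := by
        rintro φ ψ ⟨h1, h2⟩ ⟨h3, h4⟩
        refine ⟨by rw [map_add, h1, h3, add_zero], fun u hu hu' => ?_⟩
        rw [map_add, h2 u hu hu', h4 u hu hu', add_zero]
      zero_mem' := ⟨map_zero _, fun u _ _ => map_zero _⟩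
      smul_mem' := by
        rintro c φ ⟨h1, h2⟩
        refine ⟨by rw [map_smul, h1, smul_zero], fun u hu hu' => ?_⟩
        rw [map_smul, h2 u hu hu', smul_zero] }
  let P : Z →ₗ[ℝ] F × E := ((L.prod (T.dv 0)) : X →ₗ[ℝ] F × E).comp Z.subtype
  have hcl : IsClosed (LinearMap.range P : Set (F × E)) :=
    Submodule.closed_of_finiteDimensional _
  have hex : ∀ x : E, ∃ φ : Z, P φ = (0, x) := by
    intro x
    have hmem : ((0 : F), x) ∈ closure (LinearMap.range P : Set (F × E)) := by
      rw [Metric.mem_closure_iff]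
      intro η hη
      obtain ⟨φ, p1, p2, p3, p4⟩ := hbump x _ (Real.exp_pos s) η hη
      refine ⟨P ⟨φ, p1, p3⟩, LinearMap.mem_range_self _ _, ?_⟩
      have : P ⟨φ, p1, p3⟩ = (L φ, x) := by
        change (L φ, T.dv 0 φ) = _
        rw [p2]
      rw [this, Prod.dist_eq]
      simp only [dist_self, dist_zero_left]
      rw [max_lt_iff]
      exact ⟨p4, hη⟩
    rw [hcl.closure_eq] at hmem
    exact hmem
  let K : Submodule ℝ Z := LinearMap.ker ((LinearMap.fst ℝ F E).comp P)
  let D : K →ₗ[ℝ] E := ((LinearMap.snd ℝ F E).comp P).comp K.subtype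
  have hD : Function.Surjective D := by
    intro x
    obtain ⟨φ, hφ⟩ := hex x
    refine ⟨⟨φ, ?_⟩, ?_⟩
    · simp [K, hφ]
    · simp [D, hφ]
  obtain ⟨Y0, hY0⟩ := D.exists_rightInverse_of_surjective (LinearMap.range_eq_top.2 hD)
  let Y1 : E →ₗ[ℝ] X := Z.subtype.comp (K.subtype.comp Y0)
  refine ⟨LinearMap.toContinuousLinearMap Y1, fun x => ?_⟩
  have hx : ((LinearMap.toContinuousLinearMap Y1) x) = ((Y0 x : Z) : X) := rfl
  rw [hx]
  refine ⟨(Y0 x : Z).2.1, ?_, ?_, (Y0 x : Z).2.2⟩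
  · exact LinearMap.congr_fun hY0 x
  · have := (Y0 x).2
    rw [LinearMap.mem_ker] at this
    exact this

lemma Ycond_smooth (L : X →L[ℝ] F)
    (hbump : ∀ x : E, ∀ ε > 0, ∀ η > 0, ∃ φ : X, T.ev 0 φ = 0 ∧ T.dv 0 φ = x ∧
      (∀ u ∈ Icc0 r, u ≤ -ε → T.ev u φ = 0) ∧ ‖L φ‖ < η) :
    ∃ Y : ℝ → E →L[ℝ] X, ContDiff ℝ 1 Y ∧ ∀ s, Y s ∈ T.Ycond L s := by
  obtain ⟨Y, hY⟩ := exists_contMDiffMap_forall_mem_convex_of_local_const (n := 1)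
    (modelWithCornersSelf ℝ ℝ) (t := fun s => T.Ycond L s)
    (fun s => T.Ycond_convex L s) (fun s => by
      obtain ⟨Y, hY⟩ := T.Ycond_exists L hbump (s - 1)
      refine ⟨Y, ?_⟩
      filter_upwards [Ioi_mem_nhds (show s - 1 < s by linarith)] with s' hs'
      intro x
      obtain ⟨h1, h2, h3, h4⟩ := hY x
      refine ⟨h1, h2, h3, fun u hu hu' => h4 u hu ?_⟩
      have : Real.exp (s - 1) < Real.exp s' := Real.exp_lt_exp.2 hs'
      linarith)
  exact ⟨Y, Y.contMDiff.contDiff, hY⟩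

end AbsC1
end lemmaC
section lemmaD
open Filter Topology

variable {r : ℝ} {kk : ℕ} {X E F : Type*} [NormedAddCommGroup X] [NormedSpace ℝ X]
    [NormedAddCommGroup E] [NormedSpace ℝ E] [NormedAddCommGroup F] [NormedSpace ℝ F]
    [FiniteDimensional ℝ E]

lemma exists_scale {W : Set F} (d : Fin kk → F → ℝ)
    (hd : ∀ k, ContDiffOn ℝ 1 (d k) W) (J : Finset (Fin kk)) :
    ∃ s : F → ℝ, ContDiffOn ℝ 1 s {w | w ∈ W ∧ ∀ k ∉ J, 0 < d k w} ∧
      ∀ w ∈ {w | w ∈ W ∧ ∀ k ∉ J, 0 < d k w}, ∀ k ∉ J, Real.exp (s w) ≤ d k w := by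
  have hpos : ∀ w ∈ {w | w ∈ W ∧ ∀ k ∉ J, 0 < d k w}, 0 < 1 + ∑ k ∈ Jᶜ, (d k w)⁻¹ := by
    intro w hw
    have : 0 ≤ ∑ k ∈ Jᶜ, (d k w)⁻¹ := Finset.sum_nonneg fun k hk =>
      (inv_pos.2 (hw.2 k (Finset.mem_compl.1 hk))).le
    linarith
  refine ⟨fun w => -Real.log (1 + ∑ k ∈ Jᶜ, (d k w)⁻¹), ?_, ?_⟩
  · refine (ContDiffOn.log ?_ fun w hw => (hpos w hw).ne').neg
    refine contDiffOn_const.add (ContDiffOn.sum fun k hk => ?_)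
    exact ((hd k).mono fun w hw => hw.1).inv fun w hw => (hw.2 k (Finset.mem_compl.1 hk)).ne'
  · intro w hw k hk
    rw [Real.exp_neg, Real.exp_log (hpos w hw)]
    have h1 : (d k w)⁻¹ ≤ ∑ k ∈ Jᶜ, (d k w)⁻¹ :=
      Finset.single_le_sum (f := fun k => (d k w)⁻¹)
        (fun k hk => (inv_pos.2 (hw.2 k (Finset.mem_compl.1 hk))).le) (Finset.mem_compl.2 hk)
    rw [inv_le_comm₀ (hpos w hw) (hw.2 k hk)]
    linarith

theorem abs_main (T : AbsC1 r X E) (L : X →L[ℝ] F) (Y : ℝ → E →L[ℝ] X) (hYs : ContDiff ℝ 1 Y)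
    (hY : ∀ s, Y s ∈ T.Ycond L s) {W : Set F} (hW : IsOpen W) (d : Fin kk → F → ℝ)
    (hd : ∀ k, ContDiffOn ℝ 1 (d k) W) (hdm : ∀ k, ∀ w ∈ W, d k w ∈ Set.Icc (0:ℝ) r)
    {V : Set (Fin kk → E)} (hVo : IsOpen V) {g : (Fin kk → E) → E} (hg : ContDiffOn ℝ 1 g V)
    (J : Finset (Fin kk)) (hat : X → Fin kk → E) (hhat : hat = fun φ k => T.ev (-(d k (L φ))) φ)
    (Xf X0 : Set X) (hXf : Xf = {φ | (L φ ∈ W ∧ hat φ ∈ V) ∧ T.dv 0 φ = g (hat φ)})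
    (hX0 : X0 = {φ | T.dv 0 φ = 0}) :
    ∃ N : Set X, (∃ O, IsOpen O ∧ N = Xf ∩ O) ∧
      (∀ φ ∈ Xf, (∀ j ∈ J, d j (L φ) = 0) → (∀ k ∉ J, 0 < d k (L φ)) → φ ∈ N) ∧
      IsAlmostGraphOver N X0 ∧ ∃ R : X → X, IsC1DiffeoOn R N (R '' N) ∧
        ∃ O', IsOpen O' ∧ R '' N = X0 ∩ O' := by
  have memXf : ∀ φ, φ ∈ Xf ↔ (L φ ∈ W ∧ hat φ ∈ V) ∧ T.dv 0 φ = g (hat φ) := fun φ => by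
    rw [hXf]; rfl
  have memX0 : ∀ φ, φ ∈ X0 ↔ T.dv 0 φ = 0 := fun φ => by rw [hX0]; rfl
  have hat_apply : ∀ φ k, hat φ k = T.ev (-(d k (L φ))) φ := fun φ k => by rw [hhat]
  obtain ⟨s, hs, hsd⟩ := exists_scale d hd J
  set WJ : Set F := {w | w ∈ W ∧ ∀ k ∉ J, 0 < d k w} with hWJ
  have hWJW : WJ ⊆ W := fun w hw => hw.1
  have hWJo : IsOpen WJ := by
    have : WJ = W ∩ ⋂ k ∈ Jᶜ, (W ∩ (d k) ⁻¹' Ioi 0) := by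
      ext w
      simp only [hWJ, mem_inter_iff, mem_iInter, Finset.mem_compl]
      exact ⟨fun h => ⟨h.1, fun k hk => ⟨h.1, h.2 k hk⟩⟩, fun h => ⟨h.1, fun k hk => (h.2 k hk).2⟩⟩
    rw [this]
    exact hW.inter (isOpen_biInter_finset fun k _ =>
      (hd k).continuousOn.isOpen_inter_preimage hW isOpen_Ioi)
  have hdI : ∀ k, ∀ w ∈ W, -(d k w) ∈ Icc0 r := fun k w hw =>
    ⟨by linarith [(hdm k w hw).2], by linarith [(hdm k w hw).1]⟩
  let Yw : F → E →L[ℝ] X := fun w => Y (s w)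
  have hYw : ContDiffOn ℝ 1 Yw WJ := hYs.comp_contDiffOn hs
  have hYw0 : ∀ w x, T.ev 0 (Yw w x) = 0 := fun w x => (hY (s w) x).1
  have hYwd : ∀ w x, T.dv 0 (Yw w x) = x := fun w x => (hY (s w) x).2.1
  have hYwL : ∀ w x, L (Yw w x) = 0 := fun w x => (hY (s w) x).2.2.1
  have hYwk : ∀ w ∈ WJ, ∀ k ∉ J, ∀ x, T.ev (-(d k w)) (Yw w x) = 0 := fun w hw k hk x =>
    (hY (s w) x).2.2.2 _ (hdI k w hw.1) (by linarith [hsd w hw k hk])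
  let c : F → E →L[ℝ] (Fin kk → E) := fun w =>
    ContinuousLinearMap.pi fun k => (T.ev (-(d k w))).comp (Yw w)
  have hc_apply : ∀ w x k, c w x k = T.ev (-(d k w)) (Yw w x) := fun w x k => rfl
  have hc : ContDiffOn ℝ 1 c WJ := by
    refine contDiffOn_clm_apply.2 fun x => contDiffOn_pi.2 fun k => ?_
    have h1 : ContDiffOn ℝ 1 (fun w => (Yw w x, -(d k w))) WJ :=
      (hYw.clm_apply contDiffOn_const).prodMk ((hd k).mono hWJW).neg
    exact T.ev_contDiffOn.comp h1 fun w hw => ⟨mem_univ _, hdI k w hw.1⟩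
  have hLc : ContDiff ℝ 1 L := L.contDiff
  have hhatC : ContDiffOn ℝ 1 hat (L ⁻¹' W) := by
    refine contDiffOn_pi.2 fun k => ?_
    have h1 : ContDiffOn ℝ 1 (fun φ => (φ, -(d k (L φ)))) (L ⁻¹' W) :=
      contDiffOn_id.prodMk ((hd k).comp hLc.contDiffOn fun φ hφ => hφ).neg
    have := T.ev_contDiffOn.comp h1 fun φ hφ => ⟨mem_univ _, hdI k _ hφ⟩
    rw [hhat]
    exact this
  -- the chart
  let R : X → X := fun φ => φ - Yw (L φ) (T.dv 0 φ)
  have hLR : ∀ φ, L (R φ) = L φ := fun φ => by simp [R, hYwL]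
  have hdR : ∀ φ, T.dv 0 (R φ) = 0 := fun φ => by simp [R, hYwd]
  have hLo : IsOpen (L ⁻¹' WJ) := hWJo.preimage L.continuous
  have hRC : ContDiffOn ℝ 1 R (L ⁻¹' WJ) :=
    contDiffOn_id.sub ((hYw.comp hLc.contDiffOn fun φ hφ => hφ).clm_apply
      (T.dv 0).contDiff.contDiffOn)
  have hat_add : ∀ ζ x, hat (ζ + Yw (L ζ) x) = hat ζ + c (L ζ) x := by
    intro ζ x
    funext k
    have hL : L (ζ + Yw (L ζ) x) = L ζ := by rw [map_add, hYwL, add_zero]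
    rw [hat_apply, Pi.add_apply, hat_apply, hc_apply, hL, map_add]
  have hRadd : ∀ φ, R φ + Yw (L (R φ)) (T.dv 0 φ) = φ := fun φ => by rw [hLR]; simp [R]
  have hRinv : ∀ ζ x, T.dv 0 ζ = 0 → R (ζ + Yw (L ζ) x) = ζ := by
    intro ζ x h0
    simp [R, hYwL, hYwd, h0]
  obtain ⟨D, h, hDo, hhC, hD1, hD2⟩ := SolQ_global hVo hg
  let p : X → (Fin kk → E) × (E →L[ℝ] (Fin kk → E)) := fun ζ => (hat ζ, c (L ζ))
  have hpC : ContDiffOn ℝ 1 p (L ⁻¹' WJ) :=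
    (hhatC.mono fun φ hφ => hWJW hφ).prodMk (hc.comp hLc.contDiffOn fun φ hφ => hφ)
  let q : X → ((Fin kk → E) × (E →L[ℝ] (Fin kk → E))) × E := fun φ => (p (R φ), T.dv 0 φ)
  have hRmaps : ∀ φ ∈ L ⁻¹' WJ, R φ ∈ L ⁻¹' WJ := fun φ hφ => by
    rw [mem_preimage, hLR]; exact hφ
  have hqC : ContinuousOn q (L ⁻¹' WJ) :=
    (hpC.continuousOn.comp hRC.continuousOn hRmaps).prodMk (T.dv 0).continuous.continuousOn
  let O : Set X := L ⁻¹' WJ ∩ q ⁻¹' Qset V g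
  have hO : IsOpen O := hqC.isOpen_inter_preimage hLo (Qset_isOpen V g)
  let O' : Set X := L ⁻¹' WJ ∩ p ⁻¹' D
  have hO' : IsOpen O' := hpC.continuousOn.isOpen_inter_preimage hLo hDo
  let α : X → X := fun ζ => Yw (L ζ) (h (p ζ))
  have hαC : ContDiffOn ℝ 1 α O' :=
    ((hYw.comp hLc.contDiffOn fun φ hφ => hφ.1).clm_apply
      (hhC.comp (hpC.mono inter_subset_left) fun φ hφ => hφ.2))
  -- from N to the chart
  have fwd : ∀ φ ∈ Xf ∩ O, R φ ∈ X0 ∩ O' ∧ h (p (R φ)) = T.dv 0 φ := by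
    rintro φ ⟨hφ, hφO⟩
    have hsol : SolQ V g (p (R φ)) (T.dv 0 φ) := by
      refine ⟨hφO.2, ?_⟩
      change T.dv 0 φ = g (hat (R φ) + c (L (R φ)) (T.dv 0 φ))
      rw [← hat_add, hRadd]
      exact ((memXf φ).1 hφ).2
    obtain ⟨a, b⟩ := hD2 _ _ hsol
    exact ⟨⟨(memX0 _).2 (hdR φ), hRmaps φ hφO.1, a⟩, b⟩
  have bwd : ∀ ζ ∈ X0 ∩ O', ζ + α ζ ∈ Xf ∩ O ∧ R (ζ + α ζ) = ζ := by
    rintro ζ ⟨hζ0, hζO⟩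
    have h0 := (memX0 ζ).1 hζ0
    have hsol := hD1 _ hζO.2
    have hR : R (ζ + α ζ) = ζ := hRinv ζ _ h0
    have hLz : L (ζ + α ζ) = L ζ := by simp [α, hYwL]
    have hhz : hat (ζ + α ζ) = hat ζ + c (L ζ) (h (p ζ)) := hat_add ζ _
    have hdz : T.dv 0 (ζ + α ζ) = h (p ζ) := by simp [α, hYwd, h0]
    refine ⟨⟨(memXf _).2 ⟨⟨?_, ?_⟩, ?_⟩, ?_, ?_⟩, hR⟩
    · rw [hLz]; exact hWJW hζO.1
    · rw [hhz]; exact SolQ_mem hsol.1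
    · rw [hdz, hhz]; exact hsol.2
    · rw [mem_preimage, hLz]; exact hζO.1
    · change (p (R (ζ + α ζ)), T.dv 0 (ζ + α ζ)) ∈ Qset V g
      rw [hR, hdz]; exact hsol.1
  have fb : ∀ φ ∈ Xf ∩ O, R φ + α (R φ) = φ := by
    intro φ hφ
    change R φ + Yw (L (R φ)) (h (p (R φ))) = φ
    rw [(fwd φ hφ).2, hRadd]
  have himg : R '' (Xf ∩ O) = X0 ∩ O' := by
    ext ζ
    constructor
    · rintro ⟨φ, hφ, rfl⟩
      exact (fwd φ hφ).1
    · intro hζ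
      exact ⟨ζ + α ζ, (bwd ζ hζ).1, (bwd ζ hζ).2⟩
  have himg2 : (fun ζ => ζ + α ζ) '' (X0 ∩ O') = Xf ∩ O := by
    ext φ
    constructor
    · rintro ⟨ζ, hζ, rfl⟩
      exact (bwd ζ hζ).1
    · intro hφ
      exact ⟨R φ, (fwd φ hφ).1, fb φ hφ⟩
  have hRC' : ContDiffOn ℝ 1 R (Xf ∩ O) := hRC.mono fun φ hφ => hφ.2.1
  have hGC' : ContDiffOn ℝ 1 (fun ζ => ζ + α ζ) (X0 ∩ O') :=
    contDiffOn_id.add (hαC.mono inter_subset_right)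
  have linv : LeftInvOn (fun ζ => ζ + α ζ) R (Xf ∩ O) := fun φ hφ => fb φ hφ
  have rinv : LeftInvOn R (fun ζ => ζ + α ζ) (X0 ∩ O') := fun ζ hζ => (bwd ζ hζ).2
  refine ⟨Xf ∩ O, ⟨O, hO, rfl⟩, ?_, ?_, R, ?_, O', hO', himg⟩
  · intro φ hφ hJ hJ'
    have hX := (memXf φ).1 hφ
    have hw : L φ ∈ WJ := ⟨hX.1.1, hJ'⟩
    have hc0 : c (L φ) = 0 := by
      ext x k
      rw [hc_apply]
      by_cases hk : k ∈ J
      · rw [hJ k hk, neg_zero, hYw0]; rfl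
      · rw [hYwk _ hw k hk]; rfl
    refine ⟨hφ, hw, ?_⟩
    have hh : hat φ = hat (R φ) := by
      have := hat_add (R φ) (T.dv 0 φ)
      rw [hRadd, hLR, hc0] at this
      simpa using this
    change ((hat (R φ), c (L (R φ))), T.dv 0 φ) ∈ Qset V g
    rw [hLR, hc0, ← hh]
    exact Qset_zero hVo hg hX.1.2 _
  · refine ⟨X0 ∩ O', α, inter_subset_left, hαC.mono inter_subset_right, ?_, ?_,
      hGC', rinv.injOn, himg2, R, hRC', rinv, linv⟩
    · rintro ζ ⟨hζ, hζN⟩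
      have h0 := (memX0 ζ).1 hζ.1
      have hRz : R ζ = ζ := by simp [R, h0]
      have := (fwd ζ hζN).2
      rw [hRz, h0] at this
      simp [α, this]
    · rintro ζ ⟨hζ, hζN⟩ hα
      apply hζN
      have h1 := (memX0 _).1 hα
      have h2 : h (p ζ) = 0 := by rw [← h1]; exact (hYwd _ _).symm
      have h3 : α ζ = 0 := by simp [α, h2]
      have := (bwd ζ hζ).1
      rwa [h3, add_zero] at this
  · rw [himg]
    exact ⟨hRC', linv.injOn, himg, fun ζ => ζ + α ζ, hGC', linv, rinv⟩

end lemmaD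
section lemmaE
open Filter Topology

variable {r : ℝ} {kk : ℕ} {X E F : Type*} [NormedAddCommGroup X] [NormedSpace ℝ X]
    [NormedAddCommGroup E] [NormedSpace ℝ E] [NormedAddCommGroup F] [NormedSpace ℝ F]
    [FiniteDimensional ℝ E] [FiniteDimensional ℝ F]

theorem abs_main' (T : AbsC1 r X E) (L : X →L[ℝ] F)
    (hbump : ∀ x : E, ∀ ε > 0, ∀ η > 0, ∃ φ : X, T.ev 0 φ = 0 ∧ T.dv 0 φ = x ∧
      (∀ u ∈ Icc0 r, u ≤ -ε → T.ev u φ = 0) ∧ ‖L φ‖ < η)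
    {W : Set F} (hW : IsOpen W) (d : Fin kk → F → ℝ)
    (hd : ∀ k, ContDiffOn ℝ 1 (d k) W) (hdm : ∀ k, ∀ w ∈ W, d k w ∈ Set.Icc (0:ℝ) r)
    {V : Set (Fin kk → E)} (hVo : IsOpen V) {g : (Fin kk → E) → E} (hg : ContDiffOn ℝ 1 g V)
    (J : Finset (Fin kk)) (hat : X → Fin kk → E) (hhat : hat = fun φ k => T.ev (-(d k (L φ))) φ)
    (Xf X0 : Set X) (hXf : Xf = {φ | (L φ ∈ W ∧ hat φ ∈ V) ∧ T.dv 0 φ = g (hat φ)})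
    (hX0 : X0 = {φ | T.dv 0 φ = 0}) :
    ∃ N : Set X, (∃ O, IsOpen O ∧ N = Xf ∩ O) ∧
      (∀ φ ∈ Xf, (∀ j ∈ J, d j (L φ) = 0) → (∀ k ∉ J, 0 < d k (L φ)) → φ ∈ N) ∧
      IsAlmostGraphOver N X0 ∧ ∃ R : X → X, IsC1DiffeoOn R N (R '' N) ∧
        ∃ O', IsOpen O' ∧ R '' N = X0 ∩ O' := by
  obtain ⟨Y, hYs, hY⟩ := T.Ycond_smooth L hbump
  exact abs_main T L Y hYs hY hW d hd hdm hVo hg J hat hhat Xf X0 hXf hX0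

theorem abs_nonempty (T : AbsC1 r X E) (L : X →L[ℝ] F)
    (hbump : ∀ x : E, ∀ ε > 0, ∀ η > 0, ∃ φ : X, T.ev 0 φ = 0 ∧ T.dv 0 φ = x ∧
      (∀ u ∈ Icc0 r, u ≤ -ε → T.ev u φ = 0) ∧ ‖L φ‖ < η)
    {W : Set F} (d : Fin kk → F → ℝ)
    (hd : ∀ k, ContDiffOn ℝ 1 (d k) W) (hdm : ∀ k, ∀ w ∈ W, d k w ∈ Set.Icc (0:ℝ) r)
    (g : (Fin kk → E) → E) (J : Finset (Fin kk)) (hat : X → Fin kk → E)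
    (hhat : hat = fun φ k => T.ev (-(d k (L φ))) φ) (φ0 : X) (hW0 : L φ0 ∈ W)
    (hj : ∀ j ∈ J, d j (L φ0) = 0) (hk : ∀ k ∉ J, 0 < d k (L φ0)) :
    ∃ φ : X, L φ = L φ0 ∧ hat φ = hat φ0 ∧ T.dv 0 φ = g (hat φ) := by
  obtain ⟨s, -, hs⟩ := exists_scale d hd J
  obtain ⟨Y, hY⟩ := T.Ycond_exists L hbump (s (L φ0))
  let x := g (hat φ0) - T.dv 0 φ0
  obtain ⟨y1, y2, y3, y4⟩ := hY x
  have hL : L (φ0 + Y x) = L φ0 := by rw [map_add, y3, add_zero]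
  have hh : hat (φ0 + Y x) = hat φ0 := by
    funext k
    rw [hhat]
    show T.ev (-(d k (L (φ0 + Y x)))) (φ0 + Y x) = T.ev (-(d k (L φ0))) φ0
    rw [hL, map_add]
    by_cases hkJ : k ∈ J
    · rw [hj k hkJ, neg_zero, y1, add_zero]
    · have h1 := hs (L φ0) ⟨hW0, hk⟩ k hkJ
      have h2 := hdm k _ hW0
      rw [y4 _ ⟨by linarith [h2.2], by linarith [h2.1]⟩ (by linarith), add_zero]
  refine ⟨φ0 + Y x, hL, hh, ?_⟩
  rw [hh, map_add, y2]
  simp [x]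

end lemmaE

section lemmaG
open Filter Topology

/-- The space `C¹([-r,0],E)` as an instance of the abstract setting. -/
def absT (r : ℝ) (E : Type*) [NormedAddCommGroup E] [NormedSpace ℝ E] :
    AbsC1 r (C1 r E) E where
  ev := evL r E
  dv := dvL r E
  hdv := fun t φ => (norm_extFun_le φ.1.2 t).trans (norm_snd_le φ.1)
  hder := fun φ t ht => φ.2 t ht
  hdvc := fun φ => by
    rw [continuousOn_iff_continuous_domRestrict]
    have : (Icc0 r).domRestrict (fun t => dvL r E t φ) = fun t => φ.1.2 t := by
      funext t
      simp only [Set.domRestrict_apply, dvL_apply, dvC, extFun, dif_pos t.2]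
    rw [this]
    exact φ.1.2.continuous

variable {r : ℝ} {n kk : ℕ} {F : Type*} [NormedAddCommGroup F] [NormedSpace ℝ F]

/-- The map `L` restricted to `C¹`. -/
def Setting.L' (S : Setting r n kk F) : C1 r (Fin n → ℝ) →L[ℝ] F :=
  S.L.comp ((ContinuousLinearMap.fst ℝ _ _).comp (C1sub r (Fin n → ℝ)).subtypeL)

lemma Setting.bump (S : Setting r n kk F) (hr : 0 < r) : ∀ x : Fin n → ℝ, ∀ ε > 0, ∀ η > 0,
    ∃ φ : C1 r (Fin n → ℝ), (absT r (Fin n → ℝ)).ev 0 φ = 0 ∧ (absT r (Fin n → ℝ)).dv 0 φ = x ∧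
      (∀ u ∈ Icc0 r, u ≤ -ε → (absT r (Fin n → ℝ)).ev u φ = 0) ∧ ‖S.L' φ‖ < η := by
  intro x ε hε η hη
  obtain ⟨ε', hε', hε1, hε2⟩ : ∃ ε' : ℝ, 0 < ε' ∧ ε' ≤ ε ∧ ‖S.L‖ * (ε' * ‖x‖) < η := by
    have hc : Continuous fun ε : ℝ => ‖S.L‖ * (ε * ‖x‖) := by fun_prop
    have h1 : ∀ᶠ ε in 𝓝[>] (0:ℝ), ‖S.L‖ * (ε * ‖x‖) < η :=
      mem_nhdsWithin_of_mem_nhds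
        (hc.continuousAt.eventually_lt continuousAt_const (by simpa using hη))
    have h2 : ∀ᶠ ε' in 𝓝[>] (0:ℝ), ε' < ε :=
      mem_nhdsWithin_of_mem_nhds (Iio_mem_nhds hε)
    obtain ⟨ε, a, b, c⟩ := (h1.and (h2.and self_mem_nhdsWithin)).exists
    exact ⟨ε, c, b.le, a⟩
  obtain ⟨φ, p1, p2, p3, p4⟩ := exists_bump (r := r) hr hε' x
  refine ⟨φ, p1, p2, fun u hu hu' => p3 u hu (by linarith), ?_⟩
  calc ‖S.L' φ‖ = ‖S.L φ.1.1‖ := rfl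
    _ ≤ ‖S.L‖ * ‖φ.1.1‖ := S.L.le_opNorm _
    _ ≤ ‖S.L‖ * (ε' * ‖x‖) := by gcongr
    _ < η := hε2

end lemmaG

variable {r : ℝ} {n kk : ℕ} {F : Type*} [NormedAddCommGroup F] [NormedSpace ℝ F]
  [FiniteDimensional ℝ F]

/-- The main result: the solution manifold decomposes into the mutually disjoint nonempty
sets `X_{fJ}` and has a finite atlas of at most `2^kk` manifold charts whose domains are
almost graphs over `X₀`. -/
theorem statement19 (hr : 0 < r) (hk : 0 < kk) (S : Setting r n kk F)
    (hV : S.U.Nonempty) (hyp : S.HypB ∨ S.HypD1B hk) :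
    (S.Xf = ⋃ J ∈ {J : Finset (Fin kk) | (S.UJ J).Nonempty}, S.XfJ J) ∧
    (∀ J : Finset (Fin kk), (S.UJ J).Nonempty → (S.XfJ J).Nonempty) ∧
    ({J : Finset (Fin kk) | (S.UJ J).Nonempty}.Pairwise
      fun J J' => Disjoint (S.XfJ J) (S.XfJ J')) ∧
    (∀ J : Finset (Fin kk), (S.UJ J).Nonempty →
      ∃ N : Set (C1 r (Fin n → ℝ)),
        (∃ O, IsOpen O ∧ N = S.Xf ∩ O) ∧ S.XfJ J ⊆ N ∧
        IsAlmostGraphOver N (X0sub r n : Set (C1 r (Fin n → ℝ))) ∧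
        ∃ R : C1 r (Fin n → ℝ) → C1 r (Fin n → ℝ),
          IsC1DiffeoOn R N (R '' N) ∧
          ∃ O', IsOpen O' ∧ R '' N = (X0sub r n : Set (C1 r (Fin n → ℝ))) ∩ O') ∧
    {J : Finset (Fin kk) | (S.UJ J).Nonempty}.ncard ≤ 2 ^ kk := by
  set T := absT r (Fin n → ℝ) with hT
  set L' := S.L' with hL'
  have hb := S.bump hr
  have hJ0 : ∀ φ ∈ S.U, φ ∈ S.UJ (Finset.univ.filter fun k => S.d k (S.Lof φ) = 0) := by
    intro φ hφ
    refine ⟨hφ, hφ.1, fun j hj => (Finset.mem_filter.1 hj).2, fun k hk => ?_⟩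
    have h0 := (S.d_mem k _ hφ.1).1
    refine lt_of_le_of_ne h0 fun h => hk ?_
    exact Finset.mem_filter.2 ⟨Finset.mem_univ _, h.symm⟩
  refine ⟨?_, ?_, ?_, ?_, ?_⟩
  · ext φ
    simp only [Set.mem_iUnion, Set.mem_setOf_eq, exists_prop]
    constructor
    · intro h
      exact ⟨_, ⟨φ, hJ0 φ h.1⟩, h, hJ0 φ h.1⟩
    · rintro ⟨J, _, h⟩
      exact h.1
  · rintro J ⟨φ0, hφ0⟩
    obtain ⟨φ, h1, h2, h3⟩ := abs_nonempty T L' hb S.d S.d_smooth S.d_mem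
      (fun v => S.g v) J S.hat rfl φ0 hφ0.1.1 hφ0.2.2.1 hφ0.2.2.2
    have h1' : S.Lof φ = S.Lof φ0 := h1
    have hU : φ ∈ S.U := ⟨by rw [h1']; exact hφ0.1.1, by rw [h2]; exact hφ0.1.2⟩
    exact ⟨φ, ⟨hU, h3⟩, hU, by rw [h1']; exact hφ0.2⟩
  · intro J _ J' _ hne
    rw [Set.disjoint_left]
    rintro φ ⟨_, _, h⟩ ⟨_, _, h'⟩
    apply hne
    ext k
    constructor
    · intro hk
      by_contra hk'
      exact (h'.2.2 k hk').ne' (h.2.1 k hk)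
    · intro hk
      by_contra hk'
      exact (h.2.2 k hk').ne' (h'.2.1 k hk)
  · intro J _
    obtain ⟨N, h1, h2, h3⟩ := abs_main' T L' hb S.Wopen S.d S.d_smooth S.d_mem S.Vopen S.g_smooth
      J S.hat rfl S.Xf (X0sub r n : Set (C1 r (Fin n → ℝ))) rfl rfl
    exact ⟨N, h1, fun φ hφ => h2 φ hφ.1 hφ.2.2.2.1 hφ.2.2.2.2, h3⟩
  · refine (Set.ncard_le_card _).trans ?_
    simp
end
end
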